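/- arXiv:1802.02549 — 2 statements merged into one kernel-verified Lean document; each statement's English description precedes it below -/
import Mathlib

section
/- Let A be any dg algebra over a commutative ring k. Two Maurer-Cartan elements of A are strongly homotopic (i.e. I-homotopic, where I is the singular simplicial set of [0,1]) if and only if they are homotopy gauge equivalent. -/
open DirectSum

/-- A (cohomologically graded) differential graded algebra over a commutative ring `k`:
a `ℤ`-graded `k`-algebra equipped with a square-zero degree `+1` differential
satisfying the graded Leibniz rule. -/
structure DGA (k : Type) [CommRing k] : Type 1 where
  A : Type
  [ringA : Ring A]
  [algA : Algebra k A]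
  gr : ℤ → Submodule k A
  [gradedA : GradedRing gr]
  d : A →ₗ[k] A
  d_sq : ∀ a, d (d a) = 0
  d_mem : ∀ (i : ℤ), ∀ a ∈ gr i, d a ∈ gr (i + 1)
  leibniz : ∀ (i : ℤ), ∀ a ∈ gr i, ∀ b, d (a * b) = d a * b + (((-1 : ℤˣ) ^ i : ℤˣ) : ℤ) • (a * d b)

attribute [instance] DGA.ringA DGA.algA DGA.gradedA

namespace DGA

variable {k : Type} [CommRing k]

/-- A Maurer-Cartan element of a dg algebra: a degree `1` element `x` with `d x + x² = 0`. -/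
def IsMC (A : DGA k) (x : A.A) : Prop := x ∈ A.gr 1 ∧ A.d x + x * x = 0

/-- The set of Maurer-Cartan elements of `A`. -/
def MCEl (A : DGA k) : Type := {x : A.A // A.IsMC x}

/-- The gauge action of an invertible element `g` on `x`:  `g·x = g x g⁻¹ - (d g) g⁻¹`. -/
def GaugeAct (A : DGA k) (g : (A.A)ˣ) (x : A.A) : A.A :=
  (g : A.A) * x * ((g⁻¹ : (A.A)ˣ) : A.A) - A.d (g : A.A) * ((g⁻¹ : (A.A)ˣ) : A.A)

/-- Gauge equivalence of elements of a dg algebra: `y = g·x` for some invertible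
degree-zero `g`. -/
def GaugeEquiv (A : DGA k) (x y : A.A) : Prop :=
  ∃ g : (A.A)ˣ, (g : A.A) ∈ A.gr 0 ∧ y = A.GaugeAct g x

/-- The Maurer-Cartan moduli set: Maurer-Cartan elements modulo gauge equivalence. -/
def MCmod (A : DGA k) : Type := Quot (fun x y : A.MCEl => A.GaugeEquiv x.1 y.1)

/-- `a` is cohomologous to `1` in the twisted algebra `A^x` (with differential `d + [x,-]`);
here `a` has degree `0` so the twisted differential of the degree `-1` element `s`
is `d s + x s + s x`. -/
def CohomologousToOne (A : DGA k) (x a : A.A) : Prop :=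
  ∃ s ∈ A.gr (-1 : ℤ), a - 1 = A.d s + (x * s + s * x)

/-- Homotopy gauge equivalence of Maurer-Cartan elements: the one-sided twisted modules
`A^{[x]}` and `A^{[y]}` are homotopy equivalent as right dg `A`-modules, explicitly:
there are degree-zero `g`, `h` intertwining the twisted differentials whose composites
are cohomologous to `1` in `A^x`, resp. `A^y`. -/
def HomotopyGaugeEquiv (A : DGA k) (x y : A.A) : Prop :=
  ∃ g ∈ A.gr 0, ∃ h ∈ A.gr 0,
    A.d g + y * g - g * x = 0 ∧
    A.d h + x * h - h * y = 0 ∧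
    A.CohomologousToOne x (h * g) ∧
    A.CohomologousToOne y (g * h)

/-- The Maurer-Cartan homotopy moduli set: MC elements modulo homotopy gauge
equivalence. -/
def MChmod (A : DGA k) : Type := Quot (fun x y : A.MCEl => A.HomotopyGaugeEquiv x.1 y.1)

open scoped Classical in
/-- The parity (Koszul sign) operator of a graded algebra: `a ↦ Σᵢ (-1)ⁱ aᵢ`. -/
noncomputable def parity (A : DGA k) (a : A.A) : A.A :=
  (DirectSum.decompose A.gr a).sum (fun i x => (((-1 : ℤˣ) ^ i : ℤˣ) : ℤ) • (x : A.A))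

end DGA

/-- A morphism of dg algebras: an algebra map preserving the grading and the differential. -/
structure DGAHom {k : Type} [CommRing k] (A B : DGA k) where
  toFun : A.A →ₐ[k] B.A
  map_gr : ∀ (i : ℤ), ∀ a ∈ A.gr i, toFun a ∈ B.gr i
  map_d : ∀ a, toFun (A.d a) = B.d (toFun a)

namespace DGAHom
variable {k : Type} [CommRing k]

def comp {A B C : DGA k} (g : DGAHom B C) (f : DGAHom A B) : DGAHom A C where
  toFun := g.toFun.comp f.toFun
  map_gr := fun i a ha => g.map_gr i _ (f.map_gr i a ha)
  map_d := fun a => by simp [f.map_d, g.map_d]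

def id' (A : DGA k) : DGAHom A A :=
  ⟨AlgHom.id k A.A, fun _ _ h => h, fun _ => rfl⟩

end DGAHom


/-! ## Topological simplices and singular simplices -/

/-- The standard topological `n`-simplex. -/
def TopSimplex (n : ℕ) : Type :=
  {f : Fin (n + 1) → ℝ // (∀ i, 0 ≤ f i) ∧ ∑ i, f i = 1}

instance (n : ℕ) : TopologicalSpace (TopSimplex n) :=
  inferInstanceAs (TopologicalSpace {f : Fin (n + 1) → ℝ // (∀ i, 0 ≤ f i) ∧ ∑ i, f i = 1})

/-- The affine map of topological simplices induced by a map of vertices. -/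
def vertAffine {m n : ℕ} (v : Fin (m + 1) → Fin (n + 1)) :
    C(TopSimplex m, TopSimplex n) where
  toFun f := ⟨fun j => ∑ i ∈ Finset.univ.filter (fun i => v i = j), f.1 i,
    ⟨fun j => Finset.sum_nonneg fun i _ => f.2.1 i, by
      rw [Finset.sum_fiberwise_of_maps_to (fun i _ => Finset.mem_univ (v i)) f.1]
      exact f.2.2⟩⟩
  continuous_toFun := by
    apply Continuous.subtype_mk
    exact continuous_pi fun j => continuous_finset_sum _ fun i _ =>
      (continuous_apply i).comp continuous_subtype_val

/-- The `i`-th face inclusion of topological simplices. -/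
def faceMap {n : ℕ} (i : Fin (n + 2)) : C(TopSimplex n, TopSimplex (n + 1)) :=
  vertAffine fun j => i.succAbove j

/-- The `i`-th degeneracy (collapse) map of topological simplices. -/
def degenMap {n : ℕ} (i : Fin (n + 1)) : C(TopSimplex (n + 1), TopSimplex n) :=
  vertAffine fun j => i.predAbove j

/-- The inclusion of the front `p`-face of the `n`-simplex. -/
def frontMap (p n : ℕ) (h : p ≤ n) : C(TopSimplex p, TopSimplex n) :=
  vertAffine fun j => Fin.castLE (by omega) j

/-- The inclusion of the back `q`-face of the `n`-simplex. -/
def backMap (q n : ℕ) (h : q ≤ n) : C(TopSimplex q, TopSimplex n) :=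
  vertAffine fun j : Fin (q + 1) => (⟨n - q + (j : ℕ), by have := j.isLt; omega⟩ : Fin (n + 1))

/-- The `j`-th vertex of the topological `n`-simplex. -/
def vertexPt (n : ℕ) (j : Fin (n + 1)) : TopSimplex n :=
  ⟨fun i => if i = j then 1 else 0,
    ⟨fun i => by dsimp only; split <;> norm_num, by simp⟩⟩

/-- The set of singular `n`-simplices of a topological space. -/
abbrev SingN (X : Type) [TopologicalSpace X] (n : ℕ) : Type := C(TopSimplex n, X)

/-- A singular `(n+1)`-simplex is degenerate if it factors through a degeneracy map. -/
def IsDegenSimplex {X : Type} [TopologicalSpace X] {n : ℕ} (σ : SingN X (n + 1)) : Prop :=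
  ∃ (i : Fin (n + 1)) (τ : SingN X n), σ = (τ : C(TopSimplex n, X)).comp (degenMap i)

/-- The constant singular `0`-simplex of `[0,1]` at `0`. -/
def const0 : SingN unitInterval 0 := ContinuousMap.const _ 0

/-- The constant singular `0`-simplex of `[0,1]` at `1`. -/
def const1 : SingN unitInterval 0 := ContinuousMap.const _ 1

/-! ## Strong homotopy of Maurer-Cartan elements via the singular simplicial set of `[0,1]` -/

/-- A Maurer-Cartan element of `A ⊗ I*`, where `I*` is the normalized singular cochain
algebra of `[0,1]` (pseudo-compact, with completed tensor product):  identified with a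
normalized `A`-valued singular cochain `X` on `[0,1]` of total degree `1`, i.e.
`X` assigns to every singular `n`-simplex of `[0,1]` an element of `A^{1-n}`, vanishes
on degenerate simplices, and satisfies the Maurer-Cartan equation
`dX + δX + X ⌣ X = 0` (with Koszul signs, the cup product being the Alexander-Whitney
front-face/back-face convolution). -/
def IsSingMCCochain {k : Type} [CommRing k] (A : DGA k)
    (X : ∀ n, SingN unitInterval n → A.A) : Prop :=
  (∀ (n : ℕ) σ, X n σ ∈ A.gr (1 - (n : ℤ))) ∧
  (∀ (n : ℕ) (i : Fin (n + 1)) (τ : SingN unitInterval n),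
    X (n + 1) (ContinuousMap.comp τ (degenMap i)) = 0) ∧
  (∀ σ : SingN unitInterval 0, A.d (X 0 σ) + X 0 σ * X 0 σ = 0) ∧
  (∀ (n : ℕ) (σ : SingN unitInterval (n + 1)),
    A.d (X (n + 1) σ)
      + (((-1 : ℤˣ) ^ ((n : ℤ) + 1) : ℤˣ) : ℤ) •
          ∑ i : Fin (n + 2), (((-1 : ℤˣ) ^ (i : ℕ) : ℤˣ) : ℤ) •
            X n (ContinuousMap.comp σ (faceMap i))
      + ∑ p : Fin (n + 2),
          (((-1 : ℤˣ) ^ (((p : ℕ) : ℤ) * (1 - ((n : ℤ) + 1 - ((p : ℕ) : ℤ)))) : ℤˣ) : ℤ) •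
            (X (p : ℕ)
                (ContinuousMap.comp σ (frontMap (p : ℕ) (n + 1) (Nat.le_of_lt_succ p.isLt))) *
              X (n + 1 - (p : ℕ))
                (ContinuousMap.comp σ (backMap (n + 1 - (p : ℕ)) (n + 1) (by omega)))) = 0)

/-- Two elements of a dg algebra `A` are strongly homotopic (`I`-homotopic, `I` being the
singular simplicial set of `[0,1]`) if there is a Maurer-Cartan element of `A ⊗ I*`
restricting to them at the two endpoints of `[0,1]`. -/
def MCStronglyHomotopic {k : Type} [CommRing k] (A : DGA k) (x₀ x₁ : A.A) : Prop :=
  ∃ X : ∀ n, SingN unitInterval n → A.A,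
    IsSingMCCochain A X ∧ X 0 const0 = x₀ ∧ X 0 const1 = x₁


/-!
The space `[0,1]` and the nerve `E` of the contractible groupoid on two objects map to each other
compatibly with the endpoints, so a strong homotopy amounts to a Maurer-Cartan element of
`A ⊗ C*(E)`.  The normalized cochain algebra `C*(E)` is the completed path algebra of the quiver
`0 ⇄ 1`, with differential the graded commutator with `tJ`; it sits inside the power series in `t`
over `2 × 2` matrices, where `J` is the swap of the two objects.

Given a Maurer-Cartan element of `A ⊗ C*(E)`, adding `1` to its values on the edges `0 → 1` and
`1 → 0` yields morphisms between the two twistings of `A`, and its values on the triangles `0 1 0`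
and `1 0 1` show that they are mutually inverse up to homotopy.

Conversely, the cone of a homotopy equivalence `f` has a twisting element `Φ = δ + tφ`, where `φ` is
`f`, and its homotopy inverse yields `κ` with `D κ + [Φ, κ] = t`.  The Catalan series
`c = 1 - κ² c²` commutes with `κ` and is closed for `D + [Φ, -]`, so that `G = Φ + t κ c` satisfies
`D G + G² = t² (c + κ² c²) = t²`, and `G - tJ` is the desired Maurer-Cartan element.
-/

/-- The sign `(-1)^i` of a parity `i`, as an integer. -/
def paritySign (i : ZMod 2) : ℤ := (((-1 : ℤˣ) ^ i : ℤˣ) : ℤ)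

lemma paritySign_zero : paritySign 0 = 1 := by simp [paritySign]

lemma paritySign_one : paritySign 1 = -1 := by simp [paritySign]

lemma paritySign_add (i j : ZMod 2) :
    paritySign (i + j) = paritySign i * paritySign j := by
  simp [paritySign, uzpow_add]

lemma paritySign_mul_self (i : ZMod 2) : paritySign i * paritySign i = 1 := by
  rw [← paritySign_add, CharTwo.add_self_eq_zero, paritySign_zero]

lemma paritySign_natCast (n : ℕ) : paritySign n = (-1) ^ n := by
  simp [paritySign, uzpow_natCast]

lemma paritySign_intCast (n : ℤ) : paritySign n = (((-1 : ℤˣ) ^ n : ℤˣ) : ℤ) := by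
  rw [paritySign, uzpow_intCast]

lemma coe_neg_one_zpow_succ (n : ℕ) :
    (((-1 : ℤˣ) ^ ((n : ℤ) + 1) : ℤˣ) : ℤ) = (-1) ^ (n + 1) := by
  rw [← paritySign_intCast, ← paritySign_natCast]
  push_cast
  rfl

lemma coe_neg_one_zpow_cup (n p : ℕ) :
    (((-1 : ℤˣ) ^ ((p : ℤ) * (1 - ((n : ℤ) + 1 - (p : ℤ)))) : ℤˣ) : ℤ) = (-1) ^ (p * (n + 1)) := by
  rw [← paritySign_intCast, ← paritySign_natCast]
  congr 1
  push_cast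
  generalize (p : ZMod 2) = p, (n : ZMod 2) = n
  decide +revert

/-- The affine singular simplex of `[0,1]` with vertices `v`. -/
noncomputable def affineSimplex {n : ℕ} (v : Fin (n + 1) → ZMod 2) : SingN unitInterval n where
  toFun t := ⟨∑ j, t.1 j * ((v j).val : ℝ), by
    have val_le_one (i : ZMod 2) : (i.val : ℝ) ≤ 1 := by
      exact_mod_cast Nat.le_of_lt_succ (ZMod.val_lt i)
    refine ⟨Finset.sum_nonneg fun j _ => mul_nonneg (t.2.1 j) (Nat.cast_nonneg _), ?_⟩
    exact (Finset.sum_le_sum fun j _ =>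
      mul_le_of_le_one_right (t.2.1 j) (val_le_one (v j))).trans_eq t.2.2⟩
  continuous_toFun := Continuous.subtype_mk (continuous_finsetSum _ fun j _ =>
    ((continuous_apply j).comp continuous_subtype_val).mul continuous_const) _

lemma affineSimplex_apply {n : ℕ} (v : Fin (n + 1) → ZMod 2) (t : TopSimplex n) :
    (affineSimplex v t : ℝ) = ∑ j, t.1 j * ((v j).val : ℝ) := rfl

lemma affineSimplex_comp_vertAffine {m n : ℕ} (v : Fin (n + 1) → ZMod 2)
    (w : Fin (m + 1) → Fin (n + 1)) :
    (affineSimplex v).comp (vertAffine w) = affineSimplex (v ∘ w) := by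
  ext t
  change ∑ j, (∑ i with w i = j, t.1 i) * ((v j).val : ℝ) = ∑ i, t.1 i * ((v (w i)).val : ℝ)
  rw [← Finset.sum_fiberwise Finset.univ w]
  refine Finset.sum_congr rfl fun j _ => ?_
  rw [Finset.sum_mul]
  refine Finset.sum_congr rfl fun i hi => ?_
  rw [(Finset.mem_filter.mp hi).2]

lemma affineSimplex_const_zero : affineSimplex (fun _ : Fin 1 => 0) = const0 := by
  ext t
  simp [affineSimplex_apply, const0]

lemma affineSimplex_const_one : affineSimplex (fun _ : Fin 1 => 1) = const1 := by
  ext t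
  simpa [affineSimplex_apply, const1, ZMod.val_one] using t.2.2

open scoped Classical in
/-- The word of vertices of a singular simplex of `[0,1]`, where every vertex other than `0` is
sent to `1`. -/
noncomputable def vertexWord {n : ℕ} (σ : SingN unitInterval n) : Fin (n + 1) → ZMod 2 :=
  fun j => if σ (vertexPt n j) = 0 then 0 else 1

lemma vertAffine_vertexPt {m n : ℕ} (w : Fin (m + 1) → Fin (n + 1)) (j : Fin (m + 1)) :
    vertAffine w (vertexPt m j) = vertexPt n (w j) := by
  refine Subtype.ext (funext fun l => ?_)
  change (∑ i with w i = l, if i = j then (1 : ℝ) else 0) = if l = w j then 1 else 0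
  simp [eq_comm]

lemma vertexWord_comp_vertAffine {m n : ℕ} (σ : SingN unitInterval n)
    (w : Fin (m + 1) → Fin (n + 1)) :
    vertexWord (σ.comp (vertAffine w)) = vertexWord σ ∘ w := by
  funext j
  simp [vertexWord, vertAffine_vertexPt]

lemma vertexWord_const0 : vertexWord const0 = fun _ => 0 := by
  funext j
  simp [vertexWord, const0]

lemma vertexWord_const1 : vertexWord const1 = fun _ => 1 := by
  funext j
  simp [vertexWord, const1]

/-- A Maurer-Cartan element of `A ⊗ C*(E)`, where `C*(E)` is the normalized cochain algebra of the
nerve `E` of the contractible groupoid with two objects.  An `n`-simplex of `E` is a word of `n + 1`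
letters in `ZMod 2`.  With `p + q = n + 1` the Koszul sign `(-1)^(p(1-q))` of the cup product equals
`(-1)^(p(n+1))`. -/
structure IsWordMCCochain {k : Type} [CommRing k] (A : DGA k)
    (Z : ∀ n, (Fin (n + 1) → ZMod 2) → A.A) : Prop where
  mem_gr (n : ℕ) (v : Fin (n + 1) → ZMod 2) : Z n v ∈ A.gr (1 - (n : ℤ))
  map_degen (n : ℕ) (i : Fin (n + 1)) (v : Fin (n + 1) → ZMod 2) : Z (n + 1) (v ∘ i.predAbove) = 0
  mc_zero (v : Fin 1 → ZMod 2) : A.d (Z 0 v) + Z 0 v * Z 0 v = 0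
  mc_succ (n : ℕ) (v : Fin (n + 2) → ZMod 2) :
    A.d (Z (n + 1) v)
      + (-1 : ℤ) ^ (n + 1) • ∑ i : Fin (n + 2), (-1 : ℤ) ^ (i : ℕ) • Z n (v ∘ i.succAbove)
      + ∑ p : Fin (n + 2), (-1 : ℤ) ^ ((p : ℕ) * (n + 1)) •
          (Z p (v ∘ Fin.castLE (by omega)) *
            Z (n + 1 - p) (v ∘ fun j => ⟨p + j, by omega⟩)) = 0

section Transfer

variable {k : Type} [CommRing k] {A : DGA k}

lemma backMap_eq_vertAffine {n p : ℕ} (hp : p ≤ n) :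
    backMap (n - p) n (Nat.sub_le n p) = vertAffine fun j => ⟨p + j, by omega⟩ := by
  unfold backMap
  congr
  funext j
  congr 2
  omega

lemma IsSingMCCochain.isWordMCCochain_affineSimplex {X : ∀ n, SingN unitInterval n → A.A}
    (hX : IsSingMCCochain A X) : IsWordMCCochain A fun n v => X n (affineSimplex v) := by
  obtain ⟨mem_gr, map_degen, mc_zero, mc_succ⟩ := hX
  refine ⟨fun n v => mem_gr n _, fun n i v => ?_, fun v => mc_zero _, fun n v => ?_⟩
  · rw [← affineSimplex_comp_vertAffine]
    exact map_degen n i _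
  · have h := mc_succ n (affineSimplex v)
    simp only [coe_neg_one_zpow_succ, coe_neg_one_zpow_cup, faceMap, frontMap,
      backMap_eq_vertAffine, Fin.is_le, affineSimplex_comp_vertAffine] at h
    simpa only [Units.val_pow_eq_pow_val, Units.val_neg, Units.val_one] using h

lemma IsWordMCCochain.isSingMCCochain_vertexWord {Z : ∀ n, (Fin (n + 1) → ZMod 2) → A.A}
    (hZ : IsWordMCCochain A Z) : IsSingMCCochain A fun n σ => Z n (vertexWord σ) := by
  refine ⟨fun n σ => hZ.mem_gr n _, fun n i τ => ?_, fun σ => hZ.mc_zero _, fun n σ => ?_⟩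
  · simp only [degenMap, vertexWord_comp_vertAffine]
    exact hZ.map_degen n i _
  · have h := hZ.mc_succ n (vertexWord σ)
    simp only [coe_neg_one_zpow_succ, coe_neg_one_zpow_cup, faceMap, frontMap,
      backMap_eq_vertAffine, Fin.is_le, vertexWord_comp_vertAffine]
    simpa only [Units.val_pow_eq_pow_val, Units.val_neg, Units.val_one] using h

lemma mcStronglyHomotopic_iff_exists_isWordMCCochain {x y : A.A} :
    MCStronglyHomotopic A x y ↔
      ∃ Z, IsWordMCCochain A Z ∧ Z 0 (fun _ => 0) = x ∧ Z 0 (fun _ => 1) = y := by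
  constructor
  · rintro ⟨X, hX, rfl, rfl⟩
    exact ⟨_, hX.isWordMCCochain_affineSimplex,
      congrArg _ affineSimplex_const_zero, congrArg _ affineSimplex_const_one⟩
  · rintro ⟨Z, hZ, rfl, rfl⟩
    exact ⟨_, hZ.isSingMCCochain_vertexWord,
      congrArg _ vertexWord_const0, congrArg _ vertexWord_const1⟩

end Transfer

section LowDegree

variable {k : Type} [CommRing k] {A : DGA k}

lemma DGA.d_one : A.d 1 = 0 := by
  simpa using A.leibniz 0 1 SetLike.GradedOne.one_mem 1

namespace IsWordMCCochain

variable {Z : ∀ n, (Fin (n + 1) → ZMod 2) → A.A}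

lemma apply_edge_self (hZ : IsWordMCCochain A Z) (a : ZMod 2) : Z 1 ![a, a] = 0 := by
  convert hZ.map_degen 0 0 ![a]
  ext j
  fin_cases j <;> rfl

lemma d_edge (hZ : IsWordMCCochain A Z) (a b : ZMod 2) :
    A.d (Z 1 ![a, b]) = Z 0 ![b] - Z 0 ![a] - Z 0 ![a] * Z 1 ![a, b] + Z 1 ![a, b] * Z 0 ![b] := by
  have h := hZ.mc_succ 0 ![a, b]
  rw [Fin.sum_univ_two, Fin.sum_univ_two] at h
  have h' : A.d (Z 1 ![a, b])
      + (-1 : ℤ) ^ (0 + 1) • ((-1 : ℤ) ^ 0 • Z 0 ![b] + (-1 : ℤ) ^ 1 • Z 0 ![a])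
      + ((-1 : ℤ) ^ (0 * (0 + 1)) • (Z 0 ![a] * Z 1 ![a, b])
        + (-1 : ℤ) ^ (1 * (0 + 1)) • (Z 1 ![a, b] * Z 0 ![b])) = 0 := by
    convert h using 8 <;> first | rfl | (funext j; fin_cases j <;> rfl)
  linear_combination (norm := noncomm_ring) h'

lemma d_triangle (hZ : IsWordMCCochain A Z) (a b c : ZMod 2) :
    A.d (Z 2 ![a, b, c]) = Z 1 ![a, c] - Z 1 ![b, c] - Z 1 ![a, b]
      - Z 0 ![a] * Z 2 ![a, b, c] - Z 1 ![a, b] * Z 1 ![b, c] - Z 2 ![a, b, c] * Z 0 ![c] := by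
  have h := hZ.mc_succ 1 ![a, b, c]
  rw [Fin.sum_univ_three, Fin.sum_univ_three] at h
  have h' : A.d (Z 2 ![a, b, c])
      + (-1 : ℤ) ^ (1 + 1) • ((-1 : ℤ) ^ 0 • Z 1 ![b, c] + (-1 : ℤ) ^ 1 • Z 1 ![a, c]
        + (-1 : ℤ) ^ 2 • Z 1 ![a, b])
      + ((-1 : ℤ) ^ (0 * (1 + 1)) • (Z 0 ![a] * Z 2 ![a, b, c])
        + (-1 : ℤ) ^ (1 * (1 + 1)) • (Z 1 ![a, b] * Z 1 ![b, c])
        + (-1 : ℤ) ^ 4 • (Z 2 ![a, b, c] * Z 0 ![c])) = 0 := by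
    convert h using 8 <;> first | rfl | (funext j; fin_cases j <;> rfl)
  linear_combination (norm := noncomm_ring) h'

lemma cohomologousToOne (hZ : IsWordMCCochain A Z) (a b : ZMod 2) :
    A.CohomologousToOne (Z 0 ![a]) ((1 + Z 1 ![a, b]) * (1 + Z 1 ![b, a])) := by
  refine ⟨-Z 2 ![a, b, a], neg_mem (by simpa using hZ.mem_gr 2 ![a, b, a]), ?_⟩
  rw [map_neg, hZ.d_triangle, hZ.apply_edge_self]
  noncomm_ring

theorem homotopyGaugeEquiv (hZ : IsWordMCCochain A Z) :
    A.HomotopyGaugeEquiv (Z 0 ![0]) (Z 0 ![1]) := by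
  have edge_mem (a b : ZMod 2) : 1 + Z 1 ![a, b] ∈ A.gr 0 :=
    add_mem SetLike.GradedOne.one_mem (by simpa using hZ.mem_gr 1 ![a, b])
  have edge_intertwines (a b : ZMod 2) : A.d (1 + Z 1 ![a, b]) + Z 0 ![a] * (1 + Z 1 ![a, b])
      - (1 + Z 1 ![a, b]) * Z 0 ![b] = 0 := by
    rw [map_add, DGA.d_one, hZ.d_edge]
    noncomm_ring
  exact ⟨_, edge_mem 1 0, _, edge_mem 0 1, edge_intertwines 1 0, edge_intertwines 0 1,
    hZ.cohomologousToOne 0 1, hZ.cohomologousToOne 1 0⟩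

end IsWordMCCochain

end LowDegree

section Alternating

/-- A word in `ZMod 2` is alternating if no two consecutive letters agree; these are the
nondegenerate simplices of the nerve `E`. -/
def IsAlternating {n : ℕ} (v : Fin n → ZMod 2) : Prop :=
  ∀ a b : Fin n, (b : ℕ) = a + 1 → v b ≠ v a

lemma IsAlternating.apply_eq {n : ℕ} {v : Fin (n + 1) → ZMod 2} (hv : IsAlternating v)
    (j : Fin (n + 1)) : v j = v 0 + (j : ℕ) := by
  induction j using Fin.induction with
  | zero => simp
  | succ j ih =>
    have eq_add_one {a b : ZMod 2} (h : a ≠ b) : a = b + 1 := by decide +revert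
    rw [eq_add_one (hv j.castSucc j.succ rfl), ih]
    simp [add_assoc]

lemma IsAlternating.comp {m n : ℕ} {v : Fin n → ZMod 2} (hv : IsAlternating v) {w : Fin m → Fin n}
    (hw : ∀ a b : Fin m, (b : ℕ) = a + 1 → (w b : ℕ) = w a + 1) : IsAlternating (v ∘ w) :=
  fun a b hab => hv _ _ (hw a b hab)

lemma not_isAlternating_comp_predAbove {n : ℕ} (v : Fin (n + 1) → ZMod 2) (i : Fin (n + 1)) :
    ¬ IsAlternating (v ∘ i.predAbove) := fun h =>
  h i.castSucc i.succ rfl (by simp)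

lemma IsAlternating.not_comp_succAbove_inner {n : ℕ} {v : Fin (n + 2) → ZMod 2}
    (hv : IsAlternating v) (j : Fin n) : ¬ IsAlternating (v ∘ j.castSucc.succ.succAbove) := by
  intro h
  refine h j.castSucc j.succ rfl ?_
  have skip : j.castSucc.succ.succAbove j.castSucc = j.castSucc.castSucc ∧
      j.castSucc.succ.succAbove j.succ = j.succ.succ := by
    constructor <;> simp [Fin.succAbove, Fin.lt_def]
  rw [Function.comp_apply, Function.comp_apply, skip.1, skip.2, hv.apply_eq j.succ.succ,
    hv.apply_eq j.castSucc.castSucc]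
  simp only [Fin.val_succ, Fin.val_castSucc, Nat.cast_add, Nat.cast_one, add_assoc,
    CharTwo.add_self_eq_zero, add_zero]

lemma comp_succAbove_eq_of_eq {α : Type*} {n : ℕ} {v : Fin (n + 1) → α} {a b : Fin (n + 1)}
    (hab : (b : ℕ) = a + 1) (h : v b = v a) : v ∘ a.succAbove = v ∘ b.succAbove := by
  funext l
  obtain hl | hl := eq_or_ne (l : ℕ) a
  · have ha : a.succAbove l = b := by
      simp [Fin.succAbove, Fin.lt_def, Fin.ext_iff, hl, hab]
    have hb : b.succAbove l = a := by
      simp [Fin.succAbove, Fin.lt_def, Fin.ext_iff, hl, hab]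
    simp only [Function.comp_apply, ha, hb, h]
  · refine congrArg v ?_
    simp only [Fin.succAbove, Fin.lt_def, Fin.val_castSucc]
    split_ifs <;> first | rfl | omega

lemma not_isAlternating_comp_succAbove {n : ℕ} {v : Fin (n + 1) → ZMod 2} {a b i : Fin (n + 1)}
    (hab : (b : ℕ) = a + 1) (h : v b = v a) (hia : i ≠ a) (hib : i ≠ b) :
    ¬ IsAlternating (v ∘ i.succAbove) := by
  obtain ⟨a, rfl⟩ := Fin.exists_succAbove_eq hia.symm
  obtain ⟨b, rfl⟩ := Fin.exists_succAbove_eq hib.symm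
  refine fun hi => hi a b ?_ h
  simp only [Fin.succAbove, Fin.lt_def, Fin.val_castSucc] at hab
  split_ifs at hab <;> simp only [Fin.val_castSucc, Fin.val_succ] at hab <;> omega

section Cochain

variable {R : Type*} [Ring R]

open scoped Classical in
/-- The normalized cochain on `E` with value `Y n i` on the alternating word of length `n + 1` that
starts with `i`. -/
noncomputable def alternatingCochain (Y : ℕ → ZMod 2 → R) (n : ℕ) (v : Fin (n + 1) → ZMod 2) : R :=
  if IsAlternating v then Y n (v 0) else 0

variable {Y : ℕ → ZMod 2 → R}

lemma alternatingCochain_of_isAlternating {n : ℕ} {v : Fin (n + 1) → ZMod 2}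
    (hv : IsAlternating v) : alternatingCochain Y n v = Y n (v 0) := if_pos hv

lemma alternatingCochain_of_not_isAlternating {n : ℕ} {v : Fin (n + 1) → ZMod 2}
    (hv : ¬ IsAlternating v) : alternatingCochain Y n v = 0 := if_neg hv

lemma alternatingCochain_zero (v : Fin 1 → ZMod 2) : alternatingCochain Y 0 v = Y 0 (v 0) :=
  alternatingCochain_of_isAlternating fun a b => by omega

lemma sum_faces_of_isAlternating {n : ℕ} {v : Fin (n + 2) → ZMod 2} (hv : IsAlternating v) :
    ∑ i : Fin (n + 2), (-1 : ℤ) ^ (i : ℕ) • alternatingCochain Y n (v ∘ i.succAbove) =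
      Y n (v 0 + 1) + (-1 : ℤ) ^ (n + 1) • Y n (v 0) := by
  have first : alternatingCochain Y n (v ∘ (0 : Fin (n + 2)).succAbove) = Y n (v 0 + 1) := by
    rw [alternatingCochain_of_isAlternating (hv.comp fun a b => by simp), Function.comp_apply,
      hv.apply_eq]
    simp
  have last : alternatingCochain Y n (v ∘ (Fin.last n).succ.succAbove) = Y n (v 0) := by
    rw [alternatingCochain_of_isAlternating (hv.comp fun a b => by simp), Function.comp_apply]
    simp
  rw [Fin.sum_univ_succ, Fin.sum_univ_castSucc, Finset.sum_eq_zero, first, last]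
  · simp
  · intro j _
    rw [alternatingCochain_of_not_isAlternating (hv.not_comp_succAbove_inner j), smul_zero]

lemma sum_faces_of_not_isAlternating {n : ℕ} {v : Fin (n + 2) → ZMod 2}
    (hv : ¬ IsAlternating v) :
    ∑ i : Fin (n + 2), (-1 : ℤ) ^ (i : ℕ) • alternatingCochain Y n (v ∘ i.succAbove) = 0 := by
  simp only [IsAlternating, not_forall, ne_eq, not_not] at hv
  obtain ⟨a, b, hab, h⟩ := hv
  have ne : a ≠ b := by
    rintro rfl
    omega
  rw [Fintype.sum_eq_add a b ne, comp_succAbove_eq_of_eq hab h, hab, pow_succ]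
  · simp
  · rintro i ⟨hia, hib⟩
    rw [alternatingCochain_of_not_isAlternating (not_isAlternating_comp_succAbove hab h hia hib),
      smul_zero]

lemma alternatingCochain_cup_of_isAlternating {n : ℕ} {v : Fin (n + 2) → ZMod 2}
    (hv : IsAlternating v) (p : Fin (n + 2)) :
    alternatingCochain Y p (v ∘ Fin.castLE (by omega)) *
        alternatingCochain Y (n + 1 - p) (v ∘ fun j => ⟨p + j, by omega⟩) =
      Y p (v 0) * Y (n + 1 - p) (v 0 + (p : ℕ)) := by
  rw [alternatingCochain_of_isAlternating (hv.comp fun a b => by simp),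
    alternatingCochain_of_isAlternating (hv.comp fun a b hab => by dsimp only; omega),
    Function.comp_apply, Function.comp_apply]
  simp [hv.apply_eq p]

lemma alternatingCochain_cup_of_not_isAlternating {n : ℕ} {v : Fin (n + 2) → ZMod 2}
    (hv : ¬ IsAlternating v) (p : Fin (n + 2)) :
    alternatingCochain Y p (v ∘ Fin.castLE (by omega)) *
        alternatingCochain Y (n + 1 - p) (v ∘ fun j => ⟨p + j, by omega⟩) = 0 := by
  simp only [IsAlternating, not_forall, ne_eq, not_not] at hv
  obtain ⟨a, b, hab, h⟩ := hv
  obtain hbp | hpa : (b : ℕ) ≤ p ∨ (p : ℕ) ≤ a := by omega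
  · rw [alternatingCochain_of_not_isAlternating, zero_mul]
    exact fun front => front ⟨a, by omega⟩ ⟨b, by omega⟩ hab h
  · rw [alternatingCochain_of_not_isAlternating (n := n + 1 - p), mul_zero]
    refine fun back => back ⟨a - p, by omega⟩ ⟨b - p, by omega⟩ (by simp only; omega) ?_
    have hpb : (p : ℕ) ≤ b := by omega
    simpa only [Function.comp_apply, Nat.add_sub_cancel' hpa, Nat.add_sub_cancel' hpb] using h

end Cochain

variable {k : Type} [CommRing k] {A : DGA k}

/-- A Maurer-Cartan element of `A ⊗ C*(E)` in terms of its values `Y n i` on the alternating words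
of length `n + 1` starting with `i`. -/
structure IsPathMCCochain {k : Type} [CommRing k] (A : DGA k) (Y : ℕ → ZMod 2 → A.A) : Prop where
  mem_gr (n : ℕ) (i : ZMod 2) : Y n i ∈ A.gr (1 - (n : ℤ))
  mc_zero (i : ZMod 2) : A.d (Y 0 i) + Y 0 i * Y 0 i = 0
  mc_succ (n : ℕ) (i : ZMod 2) :
    A.d (Y (n + 1) i) + (-1 : ℤ) ^ (n + 1) • Y n (i + 1) + Y n i
      + ∑ pq ∈ Finset.HasAntidiagonal.antidiagonal (n + 1),
          (-1 : ℤ) ^ (pq.1 * (n + 1)) • (Y pq.1 i * Y pq.2 (i + pq.1)) = 0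

lemma IsPathMCCochain.isWordMCCochain {Y : ℕ → ZMod 2 → A.A} (hY : IsPathMCCochain A Y) :
    IsWordMCCochain A (alternatingCochain Y) where
  mem_gr n v := by
    by_cases hv : IsAlternating v
    · simpa only [alternatingCochain_of_isAlternating hv] using hY.mem_gr n _
    · simp only [alternatingCochain_of_not_isAlternating hv, zero_mem]
  map_degen n i v := alternatingCochain_of_not_isAlternating (not_isAlternating_comp_predAbove v i)
  mc_zero v := by simpa only [alternatingCochain_zero] using hY.mc_zero (v 0)
  mc_succ n v := by
    by_cases hv : IsAlternating v
    · have h := hY.mc_succ n (v 0)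
      rw [Finset.Nat.sum_antidiagonal_eq_sum_range_succ_mk, Finset.sum_range] at h
      simp only [alternatingCochain_cup_of_isAlternating hv]
      rw [alternatingCochain_of_isAlternating hv, sum_faces_of_isAlternating hv, smul_add,
        smul_smul, ← mul_pow, neg_one_mul, neg_neg, one_pow, one_smul, ← add_assoc]
      exact h
    · simp only [alternatingCochain_cup_of_not_isAlternating hv, smul_zero, Finset.sum_const_zero]
      rw [alternatingCochain_of_not_isAlternating hv, sum_faces_of_not_isAlternating hv, map_zero,
        smul_zero, add_zero, add_zero]

end Alternating

section PowerSeries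

open PowerSeries

variable {R : Type*} [Ring R]

lemma X_pow_dvd_mul_of_dvd_right {n : ℕ} {a b : R⟦X⟧} (h : X ^ n ∣ b) : X ^ n ∣ a * b := by
  obtain ⟨c, rfl⟩ := h
  exact ⟨a * c, (commute_X_pow a n).left_comm c⟩

lemma X_pow_succ_dvd_mul {n : ℕ} {w a : R⟦X⟧} (hw : coeff 0 w = 0) (h : X ^ n ∣ a) :
    X ^ (n + 1) ∣ w * a := by
  rw [coeff_zero_eq_constantCoeff_apply] at hw
  obtain ⟨u, rfl⟩ := X_dvd_iff.mpr hw
  rw [pow_succ', mul_assoc]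
  exact mul_dvd_mul_left X (X_pow_dvd_mul_of_dvd_right h)

lemma eq_zero_of_forall_X_pow_dvd {a : R⟦X⟧} (h : ∀ n, X ^ n ∣ a) : a = 0 :=
  PowerSeries.ext fun n => X_pow_dvd_iff.mp (h (n + 1)) n n.lt_succ_self

theorem exists_isFixedPt_of_X_pow_dvd {F : R⟦X⟧ → R⟦X⟧}
    (hF : ∀ n a b, X ^ n ∣ a - b → X ^ (n + 1) ∣ F a - F b) :
    ∃ a, Function.IsFixedPt F a ∧ ∀ n, ∃ m, coeff n a = coeff n (F^[m] 0) := by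
  have iterate_sub (n m : ℕ) : X ^ n ∣ F^[n + m] 0 - F^[n] 0 := by
    induction n with
    | zero => exact pow_zero (X : R⟦X⟧) ▸ one_dvd _
    | succ n ih =>
      rw [Nat.succ_add, Function.iterate_succ_apply', Function.iterate_succ_apply']
      exact hF n _ _ ih
  let a : R⟦X⟧ := mk fun n => coeff n (F^[n + 1] 0)
  have limit_sub (n : ℕ) : X ^ n ∣ a - F^[n] 0 := by
    refine X_pow_dvd_iff.mpr fun l hl => ?_
    obtain ⟨m, rfl⟩ := Nat.exists_eq_add_of_le (Nat.succ_le_of_lt hl)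
    have h := X_pow_dvd_iff.mp (iterate_sub (l + 1) m) l l.lt_succ_self
    rw [map_sub, sub_eq_zero] at h ⊢
    rw [coeff_mk, h]
  refine ⟨a, sub_eq_zero.mp (eq_zero_of_forall_X_pow_dvd fun n => ?_),
    fun n => ⟨n + 1, coeff_mk _ _⟩⟩
  have h := dvd_sub (hF n _ _ (limit_sub n))
    (Function.iterate_succ_apply' F n 0 ▸ limit_sub (n + 1))
  rw [sub_sub_sub_cancel_right] at h
  exact (pow_dvd_pow X n.le_succ).trans h

theorem exists_catalan_series {w : R⟦X⟧} (hw : coeff 0 w = 0) :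
    ∃ c, c = 1 - w * (c * c) ∧
      ∀ n, ∃ m, coeff n c = coeff n ((fun a => 1 - w * (a * a))^[m] 0) := by
  obtain ⟨c, hc, hcoeff⟩ := exists_isFixedPt_of_X_pow_dvd (F := fun a => 1 - w * (a * a))
    fun n a b hab => by
      have sub_eq : 1 - w * (a * a) - (1 - w * (b * b)) = -(w * (a * (a - b) + (a - b) * b)) := by
        noncomm_ring
      rw [sub_eq, dvd_neg]
      exact X_pow_succ_dvd_mul hw (dvd_add (X_pow_dvd_mul_of_dvd_right hab) (hab.mul_right b))
  exact ⟨c, hc.symm, hcoeff⟩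

lemma eq_zero_of_eq_neg_mul {w c e : R⟦X⟧} (hw : coeff 0 w = 0)
    (he : e = -(w * (e * c + c * e))) : e = 0 := by
  refine eq_zero_of_forall_X_pow_dvd fun n => ?_
  induction n with
  | zero => exact pow_zero (X : R⟦X⟧) ▸ one_dvd e
  | succ n ih =>
    rw [he, dvd_neg]
    exact X_pow_succ_dvd_mul hw (dvd_add (ih.mul_right c) (X_pow_dvd_mul_of_dvd_right ih))

lemma commute_catalan_series {κ c : R⟦X⟧} (hκ : coeff 0 (κ * κ) = 0)
    (hc : c = 1 - κ * κ * (c * c)) : Commute κ c := by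
  refine sub_eq_zero.mp (eq_zero_of_eq_neg_mul (c := c) hκ ?_)
  linear_combination (norm := noncomm_ring) κ * hc - hc * κ

end PowerSeries

section PerturbationIdentities

variable {S : Type*} [Ring S] {D : S →+ S} {t Φ κ c v G J δ φ β η ζ : S}

lemma map_linear_twisting (htD : ∀ a, D (t * a) = t * D a) (ht : ∀ a, Commute t a)
    (hδ : D δ = -(δ * δ)) (hφ : D φ = -(δ * φ + φ * δ)) (hφφ : φ * φ = 0) :
    D (δ + t * φ) = -((δ + t * φ) * (δ + t * φ)) := by
  rw [map_add, htD, hδ, hφ]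
  linear_combination (norm := noncomm_ring) -((ht δ).eq * φ) - t * (ht φ).eq * φ + t * t * hφφ

lemma map_linear_contraction (htD : ∀ a, D (t * a) = t * D a) (ht : ∀ a, Commute t a)
    (hβ : D β = -(δ * β + β * δ)) (hη : D η = 1 - (δ * η + η * δ) - (φ * β + β * φ))
    (hζ : ζ = -(φ * η + η * φ)) :
    D (β + t * η) =
      t * (1 - t * ζ) - (δ + t * φ) * (β + t * η) - (β + t * η) * (δ + t * φ) := by
  rw [map_add, htD, hβ, hη, hζ]
  linear_combination (norm := noncomm_ring) -((ht δ).eq * η) - (ht β).eq * φ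
    - t * (ht φ).eq * η - t * (ht η).eq * φ

lemma map_linear_obstruction (htD : ∀ a, D (t * a) = t * D a) (ht : ∀ a, Commute t a)
    (hζ : D ζ = ζ * δ - δ * ζ) (hζφ : ζ * φ = 0) (hφζ : φ * ζ = 0) :
    D (t * ζ) = t * ζ * (δ + t * φ) - (δ + t * φ) * (t * ζ) := by
  rw [htD, hζ]
  linear_combination (norm := noncomm_ring) -((ht δ).eq * ζ) + t * (ht ζ).eq * φ
    - t * (ht φ).eq * ζ - t * t * hζφ + t * t * hφζ

-- Since `v * v = 0`, the closed element `1 + v` is inverse to the defect `1 - v`.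
lemma map_contraction_mul_one_add (hκ : ∀ a, D (κ * a) = D κ * a - κ * D a) (hone : D 1 = 0)
    (hDκ : D κ = t * (1 - v) - Φ * κ - κ * Φ) (hDv : D v = v * Φ - Φ * v) (hv : v * v = 0) :
    D (κ * (1 + v)) = t - Φ * (κ * (1 + v)) - κ * (1 + v) * Φ := by
  rw [hκ, map_add, hone, hDκ, hDv]
  linear_combination (norm := noncomm_ring) -(t * hv)

lemma map_contraction_sq (ht : Commute t κ) (hκ : ∀ a, D (κ * a) = D κ * a - κ * D a)
    (hDκ : D κ = t - Φ * κ - κ * Φ) : D (κ * κ) = κ * κ * Φ - Φ * (κ * κ) := by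
  rw [hκ, hDκ]
  linear_combination (norm := noncomm_ring) ht.eq

lemma map_catalan_sub_commutator {w : S} (hw : ∀ a, D (w * a) = D w * a + w * D a)
    (hc : ∀ a, D (c * a) = D c * a + c * D a) (hone : D 1 = 0) (hDw : D w = w * Φ - Φ * w)
    (hcat : c = 1 - w * (c * c)) :
    D c - (c * Φ - Φ * c) =
      -(w * ((D c - (c * Φ - Φ * c)) * c + c * (D c - (c * Φ - Φ * c)))) := by
  have hDc : D c = -((w * Φ - Φ * w) * (c * c) + w * (D c * c + c * D c)) := by
    conv_lhs => rw [hcat, map_sub, hone, hw, hc, hDw, zero_sub]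
  linear_combination (norm := noncomm_ring) hDc - hcat * Φ + Φ * hcat

lemma map_add_mul_self_of_catalan (ht : ∀ a, Commute t a) (htD : ∀ a, D (t * a) = t * D a)
    (hκ : ∀ a, D (κ * a) = D κ * a - κ * D a) (hDΦ : D Φ = -(Φ * Φ))
    (hDκ : D κ = t - Φ * κ - κ * Φ) (hDc : D c = c * Φ - Φ * c)
    (hcat : c = 1 - κ * κ * (c * c)) (hκc : Commute κ c) :
    D (Φ + t * (κ * c)) + (Φ + t * (κ * c)) * (Φ + t * (κ * c)) = t * t := by
  rw [map_add, htD, hκ, hDΦ, hDκ, hDc]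
  linear_combination (norm := noncomm_ring) t * t * hcat - (ht Φ).eq * (κ * c)
    - t * (ht (κ * c)).eq * (κ * c) - t * t * κ * hκc.eq * c

lemma map_sub_add_mul_self (ht : ∀ a, Commute t a) (htD : ∀ a, D (t * a) = t * D a)
    (hDJ : D J = 0) (hJ : J * J = 1) (hG : D G + G * G = t * t) :
    D (G - t * J) + (G - t * J) * (G - t * J) + t * (J * (G - t * J) + (G - t * J) * J) = 0 := by
  rw [map_sub, htD, hDJ, mul_zero]
  linear_combination (norm := noncomm_ring) hG + (ht G).eq * J - t * t * hJ

end PerturbationIdentities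

section MatrixSeries

open PowerSeries

variable {k : Type} [CommRing k] (A : DGA k)

/-- Power series in `t` over the `2 × 2` matrices with entries in `A`.  They contain `A ⊗ C*(E)`:
the alternating word of length `n + 1` from `i` to `i + n` corresponds to the matrix unit
`(i, i + n)` times `t ^ n`. -/
abbrev MatrixSeries : Type := (Matrix (ZMod 2) (ZMod 2) A.A)⟦X⟧

/-- The differential of `A` on matrices, where the first index contributes a Koszul sign. -/
def matrixD : Matrix (ZMod 2) (ZMod 2) A.A →+ Matrix (ZMod 2) (ZMod 2) A.A where
  toFun M := Matrix.of fun i j => paritySign i • A.d (M i j)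
  map_zero' := by
    ext i j
    simp
  map_add' M N := by
    ext i j
    simp

/-- The coefficientwise extension of `matrixD` to power series; `t` is closed. -/
noncomputable def seriesD : MatrixSeries A →+ MatrixSeries A where
  toFun a := mk fun n => matrixD A (coeff n a)
  map_zero' := by
    ext1 n
    simp
  map_add' a b := by
    ext1 n
    simp

/-- The matrices of parity `ε` with entries of degree `e`, where the entry `(i, j)` has
parity `i + j`. -/
def matrixGr (e : ℤ) (ε : ZMod 2) : AddSubgroup (Matrix (ZMod 2) (ZMod 2) A.A) where
  carrier := {M | ∀ i j, M i j ∈ A.gr e ∧ (i + j ≠ ε → M i j = 0)}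
  zero_mem' i j := ⟨zero_mem _, fun _ => rfl⟩
  add_mem' hM hN i j := ⟨add_mem (hM i j).1 (hN i j).1, fun h => by
    rw [Matrix.add_apply, (hM i j).2 h, (hN i j).2 h, add_zero]⟩
  neg_mem' hM i j := ⟨neg_mem (hM i j).1, fun h => by
    rw [Matrix.neg_apply, (hM i j).2 h, neg_zero]⟩

/-- The homogeneous power series of degree `e` and parity `ε`, where `t` has degree `1` and odd
parity.  The Koszul sign of such a series is that of `e + ε`. -/
noncomputable def seriesGr (e : ℤ) (ε : ZMod 2) : AddSubgroup (MatrixSeries A) where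
  carrier := {a | ∀ n : ℕ, coeff n a ∈ matrixGr A (e - n) (ε + n)}
  zero_mem' n := by simp
  add_mem' ha hb n := by simpa using add_mem (ha n) (hb n)
  neg_mem' ha n := by simpa using ha n

variable {A} {e e' e'' : ℤ} {ε ε' ε'' : ZMod 2}

lemma matrixD_apply (M : Matrix (ZMod 2) (ZMod 2) A.A) (i j : ZMod 2) :
    matrixD A M i j = paritySign i • A.d (M i j) := rfl

lemma matrixD_single (i j : ZMod 2) (a : A.A) :
    matrixD A (Matrix.single i j a) = Matrix.single i j (paritySign i • A.d a) := by
  ext i' j'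
  rw [matrixD_apply, Matrix.single_apply, Matrix.single_apply]
  split_ifs with h
  · rw [h.1]
  · simp

lemma single_mem_matrixGr {a : A.A} (ha : a ∈ A.gr e) (i j : ZMod 2) :
    Matrix.single i j a ∈ matrixGr A e (i + j) := by
  intro i' j'
  rw [Matrix.single_apply]
  split_ifs with h
  · exact ⟨ha, fun hne => absurd (by rw [h.1, h.2]) hne⟩
  · exact ⟨zero_mem _, fun _ => rfl⟩

lemma mul_mem_matrixGr {M N : Matrix (ZMod 2) (ZMod 2) A.A} (hM : M ∈ matrixGr A e ε)
    (hN : N ∈ matrixGr A e' ε') : M * N ∈ matrixGr A (e + e') (ε + ε') := by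
  intro i j
  rw [Matrix.mul_apply]
  refine ⟨sum_mem fun l _ => SetLike.mul_mem_graded (hM i l).1 (hN l j).1, fun h => ?_⟩
  refine Finset.sum_eq_zero fun l _ => ?_
  by_cases hil : i + l = ε
  · rw [(hN l j).2 fun hlj => h ?_, mul_zero]
    rw [← hil, ← hlj, ← add_assoc, CharTwo.add_cancel_right]
  · rw [(hM i l).2 hil, zero_mul]

lemma matrixD_mul {M : Matrix (ZMod 2) (ZMod 2) A.A} (hM : M ∈ matrixGr A e ε)
    (N : Matrix (ZMod 2) (ZMod 2) A.A) :
    matrixD A (M * N) = matrixD A M * N + paritySign (e + ε) • (M * matrixD A N) := by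
  ext i j
  simp only [matrixD_apply, Matrix.mul_apply, Matrix.add_apply, Matrix.smul_apply, map_sum,
    Finset.smul_sum, ← Finset.sum_add_distrib]
  refine Finset.sum_congr rfl fun l _ => ?_
  by_cases hil : i + l = ε
  · rw [A.leibniz e _ (hM i l).1, ← paritySign_intCast, smul_add, smul_mul_assoc, mul_smul_comm,
      smul_smul, smul_smul, ← hil, paritySign_add, paritySign_add, mul_assoc, mul_assoc,
      paritySign_mul_self, mul_one, mul_comm]
  · simp [(hM i l).2 hil]

lemma coeff_seriesD (a : MatrixSeries A) (n : ℕ) :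
    coeff n (seriesD A a) = matrixD A (coeff n a) := coeff_mk n fun n => matrixD A (coeff n a)

lemma seriesD_C (M : Matrix (ZMod 2) (ZMod 2) A.A) : seriesD A (C M) = C (matrixD A M) := by
  ext1 n
  rw [coeff_seriesD, coeff_C, coeff_C]
  split_ifs <;> simp

lemma seriesD_X_mul (a : MatrixSeries A) : seriesD A (X * a) = X * seriesD A a := by
  ext1 n
  cases n <;> simp [coeff_seriesD, coeff_zero_X_mul, coeff_succ_X_mul]

lemma mul_mem_seriesGr {a b : MatrixSeries A} (ha : a ∈ seriesGr A e ε)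
    (hb : b ∈ seriesGr A e' ε') (he : e + e' = e'') (hε : ε + ε' = ε'') :
    a * b ∈ seriesGr A e'' ε'' := by
  subst he hε
  intro n
  rw [coeff_mul]
  refine sum_mem fun pq hpq => ?_
  have h := mul_mem_matrixGr (ha pq.1) (hb pq.2)
  rw [← Finset.HasAntidiagonal.mem_antidiagonal.mp hpq]
  convert h using 1
  push_cast
  congr 1 <;> ring

lemma C_mem_seriesGr {M : Matrix (ZMod 2) (ZMod 2) A.A} (hM : M ∈ matrixGr A e ε) :
    C M ∈ seriesGr A e ε := by
  intro n
  rw [coeff_C]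
  split_ifs with hn
  · simpa [hn] using hM
  · exact zero_mem _

lemma one_mem_matrixGr : (1 : Matrix (ZMod 2) (ZMod 2) A.A) ∈ matrixGr A 0 0 := by
  intro i j
  rw [Matrix.one_apply]
  split_ifs with h
  · exact ⟨SetLike.GradedOne.one_mem, fun hne => absurd (h ▸ CharTwo.add_self_eq_zero i) hne⟩
  · exact ⟨zero_mem _, fun _ => rfl⟩

lemma one_mem_seriesGr : (1 : MatrixSeries A) ∈ seriesGr A 0 0 := by
  rw [← map_one C]
  exact C_mem_seriesGr one_mem_matrixGr

lemma X_mul_mem_seriesGr {a : MatrixSeries A} (ha : a ∈ seriesGr A e ε) (he : e + 1 = e')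
    (hε : ε + 1 = ε') : X * a ∈ seriesGr A e' ε' := by
  subst he hε
  rintro (_ | n)
  · simp
  · rw [coeff_succ_X_mul]
    convert ha n using 1
    push_cast
    congr 1
    · ring
    · rw [add_assoc, add_comm (1 : ZMod 2), add_assoc, CharTwo.add_self_eq_zero, add_zero]

lemma matrixD_one : matrixD A 1 = 0 := by
  ext i j
  rw [matrixD_apply, Matrix.one_apply]
  split_ifs <;> simp [DGA.d_one]

lemma seriesD_one : seriesD A 1 = 0 := by
  rw [← map_one C, seriesD_C, matrixD_one, map_zero]

lemma seriesD_mul {a : MatrixSeries A} (ha : a ∈ seriesGr A e ε) (b : MatrixSeries A) :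
    seriesD A (a * b) = seriesD A a * b + paritySign (e + ε) • (a * seriesD A b) := by
  ext1 n
  simp only [coeff_seriesD, coeff_mul, map_sum, map_add, map_zsmul, Finset.smul_sum,
    ← Finset.sum_add_distrib]
  refine Finset.sum_congr rfl fun pq _ => ?_
  rw [matrixD_mul (ha pq.1)]
  push_cast
  congr 3
  ring

lemma seriesD_mul_of_even {a : MatrixSeries A} (ha : a ∈ seriesGr A 0 0) (b : MatrixSeries A) :
    seriesD A (a * b) = seriesD A a * b + a * seriesD A b := by
  rw [seriesD_mul ha, Int.cast_zero, add_zero, paritySign_zero, one_smul]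

lemma seriesD_mul_of_odd {a : MatrixSeries A} (ha : a ∈ seriesGr A 0 1) (b : MatrixSeries A) :
    seriesD A (a * b) = seriesD A a * b - a * seriesD A b := by
  rw [seriesD_mul ha, Int.cast_zero, zero_add, paritySign_one, neg_one_smul, ← sub_eq_add_neg]

end MatrixSeries

section Perturbation

open PowerSeries

variable {k : Type} [CommRing k] {A : DGA k} {Φ κ c : MatrixSeries A}

lemma catalan_series_mem_seriesGr {w : MatrixSeries A} (hw : w ∈ seriesGr A 0 0)
    (hc : ∀ n, ∃ m, coeff n c = coeff n ((fun a => 1 - w * (a * a))^[m] 0)) :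
    c ∈ seriesGr A 0 0 := by
  intro n
  obtain ⟨m, hm⟩ := hc n
  rw [hm]
  have step : Set.MapsTo (fun a => 1 - w * (a * a)) (seriesGr A 0 0) (seriesGr A 0 0) := by
    intro a ha
    have haa : a * a ∈ seriesGr A 0 0 := mul_mem_seriesGr ha ha (add_zero 0) (add_zero 0)
    exact sub_mem one_mem_seriesGr (mul_mem_seriesGr hw haa (add_zero 0) (add_zero 0))
  exact step.iterate m (zero_mem (seriesGr A 0 0)) n

theorem exists_seriesD_add_mul_self_eq (hΦ : Φ ∈ seriesGr A 1 0) (hκ : κ ∈ seriesGr A 0 1)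
    (hDΦ : seriesD A Φ = -(Φ * Φ)) (hDκ : seriesD A κ = X - Φ * κ - κ * Φ)
    (hκκ : coeff 0 (κ * κ) = 0) :
    ∃ G ∈ seriesGr A 1 0, coeff 0 G = coeff 0 Φ ∧ seriesD A G + G * G = X * X := by
  have hκκ_mem : κ * κ ∈ seriesGr A 0 0 :=
    mul_mem_seriesGr hκ hκ (add_zero 0) (CharTwo.add_self_eq_zero 1)
  obtain ⟨c, hcat, hcoeff⟩ := exists_catalan_series hκκ
  have hc : c ∈ seriesGr A 0 0 := catalan_series_mem_seriesGr hκκ_mem hcoeff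
  have hDκκ : seriesD A (κ * κ) = κ * κ * Φ - Φ * (κ * κ) :=
    map_contraction_sq (commute_X κ).symm (seriesD_mul_of_odd hκ) hDκ
  have hDc : seriesD A c = c * Φ - Φ * c :=
    sub_eq_zero.mp <| eq_zero_of_eq_neg_mul hκκ <| map_catalan_sub_commutator
      (seriesD_mul_of_even hκκ_mem) (seriesD_mul_of_even hc) seriesD_one hDκκ hcat
  refine ⟨Φ + X * (κ * c), ?_, by simp, ?_⟩
  · have hκc : κ * c ∈ seriesGr A 0 1 := mul_mem_seriesGr hκ hc (add_zero 0) (add_zero 1)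
    exact add_mem hΦ (X_mul_mem_seriesGr hκc (zero_add 1) (CharTwo.add_self_eq_zero 1))
  · exact map_add_mul_self_of_catalan (fun a => (commute_X a).symm) seriesD_X_mul
      (seriesD_mul_of_odd hκ) hDΦ hDκ hDc hcat (commute_catalan_series hκκ hcat)

/-- The matrix exchanging the two objects of `E`.  The graded commutator with `t` times this matrix
is the cochain differential of `E`. -/
def swapMatrix (A : DGA k) : Matrix (ZMod 2) (ZMod 2) A.A :=
  Matrix.single 0 1 1 + Matrix.single 1 0 1

lemma one_eq_single_add_single :
    (1 : Matrix (ZMod 2) (ZMod 2) A.A) = Matrix.single 0 0 1 + Matrix.single 1 1 1 :=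
  Matrix.sum_single_one.symm.trans (Fin.sum_univ_two _)

lemma swapMatrix_mul_self : swapMatrix A * swapMatrix A = 1 := by
  simp [swapMatrix, one_eq_single_add_single, add_mul, mul_add, add_comm]

lemma swapMatrix_mem_matrixGr : swapMatrix A ∈ matrixGr A 0 1 :=
  add_mem (single_mem_matrixGr SetLike.GradedOne.one_mem 0 1)
    (single_mem_matrixGr SetLike.GradedOne.one_mem 1 0)

lemma matrixD_swapMatrix : matrixD A (swapMatrix A) = 0 := by
  simp [swapMatrix, matrixD_single, DGA.d_one]

theorem exists_seriesD_add_mul_self_add_swap_eq_zero (hΦ : Φ ∈ seriesGr A 1 0)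
    (hκ : κ ∈ seriesGr A 0 1) (hDΦ : seriesD A Φ = -(Φ * Φ))
    (hDκ : seriesD A κ = X - Φ * κ - κ * Φ) (hκκ : coeff 0 (κ * κ) = 0) :
    ∃ T ∈ seriesGr A 1 0, coeff 0 T = coeff 0 Φ ∧
      seriesD A T + T * T + X * (C (swapMatrix A) * T + T * C (swapMatrix A)) = 0 := by
  obtain ⟨G, hG, hG0, hDG⟩ := exists_seriesD_add_mul_self_eq hΦ hκ hDΦ hDκ hκκ
  have hDJ : seriesD A (C (swapMatrix A)) = 0 := by
    rw [seriesD_C, matrixD_swapMatrix, map_zero]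
  have hJ : C (swapMatrix A) * C (swapMatrix A) = (1 : MatrixSeries A) := by
    rw [← map_mul, swapMatrix_mul_self, map_one]
  refine ⟨G - X * C (swapMatrix A), ?_, by simpa using hG0, ?_⟩
  · exact sub_mem hG (X_mul_mem_seriesGr (C_mem_seriesGr swapMatrix_mem_matrixGr) (zero_add 1)
      (CharTwo.add_self_eq_zero 1))
  · exact map_sub_add_mul_self (fun a => (commute_X a).symm) seriesD_X_mul hDJ hJ hDG

end Perturbation

section Cone

open PowerSeries

variable {k : Type} [CommRing k] {A : DGA k} {x y f b s t z : A.A}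

/-- The twisting element of `A^{[x]} ⊕ A^{[y]}[1]`, the module underlying the cone of a morphism
`A^{[y]} → A^{[x]}`. -/
def diagonalTwist (x y : A.A) : Matrix (ZMod 2) (ZMod 2) A.A :=
  Matrix.single 0 0 x - Matrix.single 1 1 y

lemma diagonalTwist_mem_matrixGr (hx : x ∈ A.gr 1) (hy : y ∈ A.gr 1) :
    diagonalTwist x y ∈ matrixGr A 1 0 :=
  sub_mem (single_mem_matrixGr hx 0 0) (single_mem_matrixGr hy 1 1)

lemma diagonalTwist_mul_single_zero (x y a : A.A) (j : ZMod 2) :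
    diagonalTwist x y * Matrix.single 0 j a = Matrix.single 0 j (x * a) := by
  simp [diagonalTwist, sub_mul]

lemma diagonalTwist_mul_single_one (x y a : A.A) (j : ZMod 2) :
    diagonalTwist x y * Matrix.single 1 j a = Matrix.single 1 j (-(y * a)) := by
  simp [diagonalTwist, sub_mul, Matrix.single_neg]

lemma single_zero_mul_diagonalTwist (x y a : A.A) (i : ZMod 2) :
    Matrix.single i 0 a * diagonalTwist x y = Matrix.single i 0 (a * x) := by
  simp [diagonalTwist, mul_sub]

lemma single_one_mul_diagonalTwist (x y a : A.A) (i : ZMod 2) :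
    Matrix.single i 1 a * diagonalTwist x y = Matrix.single i 1 (-(a * y)) := by
  simp [diagonalTwist, mul_sub, Matrix.single_neg]

lemma matrixD_diagonalTwist (hx : A.d x + x * x = 0) (hy : A.d y + y * y = 0) :
    matrixD A (diagonalTwist x y) = -(diagonalTwist x y * diagonalTwist x y) := by
  conv_rhs => rw [diagonalTwist, mul_sub, ← diagonalTwist]
  rw [diagonalTwist_mul_single_zero, diagonalTwist_mul_single_one, diagonalTwist, map_sub,
    matrixD_single, matrixD_single, eq_neg_of_add_eq_zero_left hx, eq_neg_of_add_eq_zero_left hy,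
    paritySign_zero, paritySign_one, one_smul, neg_one_smul, neg_neg, neg_sub, ← Matrix.single_neg,
    ← Matrix.single_neg]
  abel

lemma matrixD_single_zero_one (hf : A.d f + x * f - f * y = 0) :
    matrixD A (Matrix.single 0 1 f) =
      -(diagonalTwist x y * Matrix.single 0 1 f + Matrix.single 0 1 f * diagonalTwist x y) := by
  rw [diagonalTwist_mul_single_zero, single_one_mul_diagonalTwist, ← Matrix.single_add,
    Matrix.single_neg, matrixD_single, paritySign_zero, one_smul]
  congr 1
  linear_combination (norm := noncomm_ring) hf

lemma matrixD_single_one_zero (hb : A.d b + y * b - b * x = 0) :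
    matrixD A (Matrix.single 1 0 b) =
      -(diagonalTwist x y * Matrix.single 1 0 b + Matrix.single 1 0 b * diagonalTwist x y) := by
  rw [diagonalTwist_mul_single_one, single_zero_mul_diagonalTwist, ← Matrix.single_add,
    Matrix.single_neg, matrixD_single, paritySign_one, neg_one_smul]
  congr 1
  linear_combination (norm := noncomm_ring) -hb

/-- The diagonal part of a contraction of the cone, built from homotopies `s` and `t` for the two
composites of a morphism and its homotopy inverse. -/
def diagonalHomotopy (s t : A.A) : Matrix (ZMod 2) (ZMod 2) A.A :=
  Matrix.single 1 1 t - Matrix.single 0 0 s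

lemma diagonalHomotopy_mem_matrixGr (hs : s ∈ A.gr (-1)) (ht : t ∈ A.gr (-1)) :
    diagonalHomotopy s t ∈ matrixGr A (-1) 0 :=
  sub_mem (single_mem_matrixGr ht 1 1) (single_mem_matrixGr hs 0 0)

lemma matrixD_diagonalHomotopy (hs : f * b - 1 = A.d s + (x * s + s * x))
    (ht : b * f - 1 = A.d t + (y * t + t * y)) :
    matrixD A (diagonalHomotopy s t) =
      1 - (diagonalTwist x y * diagonalHomotopy s t + diagonalHomotopy s t * diagonalTwist x y) -
        (Matrix.single 0 1 f * Matrix.single 1 0 b +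
          Matrix.single 1 0 b * Matrix.single 0 1 f) := by
  have hds : A.d s = f * b + -1 + -(x * s) + -(s * x) := by
    linear_combination (norm := noncomm_ring) -hs
  have hdt : -A.d t = -(b * f) + 1 + y * t + t * y := by
    linear_combination (norm := noncomm_ring) ht
  rw [diagonalHomotopy, mul_sub, sub_mul, diagonalTwist_mul_single_zero,
    diagonalTwist_mul_single_one, single_zero_mul_diagonalTwist, single_one_mul_diagonalTwist,
    map_sub, matrixD_single, matrixD_single, paritySign_zero, paritySign_one, one_smul,
    neg_one_smul, hds, hdt, Matrix.single_mul_single_same, Matrix.single_mul_single_same,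
    one_eq_single_add_single]
  simp only [Matrix.single_add, ← Matrix.single_neg]
  abel

lemma d_homotopy_obstruction (hs_mem : s ∈ A.gr (-1)) (hf_mem : f ∈ A.gr 0)
    (hf : A.d f + x * f - f * y = 0) (hs : f * b - 1 = A.d s + (x * s + s * x))
    (ht : b * f - 1 = A.d t + (y * t + t * y)) :
    A.d (s * f - f * t) + x * (s * f - f * t) + (s * f - f * t) * y = 0 := by
  have sign : (((-1 : ℤˣ) ^ (-1 : ℤ) : ℤˣ) : ℤ) = -1 := rfl
  rw [map_sub, A.leibniz _ _ hs_mem, A.leibniz _ _ hf_mem, sign, zpow_zero, Units.val_one]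
  linear_combination (norm := noncomm_ring) f * ht - hs * f - s * hf - hf * t

lemma matrixD_single_obstruction (hz : A.d z + x * z + z * y = 0) :
    matrixD A (Matrix.single 0 1 z) =
      Matrix.single 0 1 z * diagonalTwist x y - diagonalTwist x y * Matrix.single 0 1 z := by
  rw [diagonalTwist_mul_single_zero, single_one_mul_diagonalTwist, sub_eq_add_neg,
    Matrix.single_neg, ← Matrix.single_add, matrixD_single, paritySign_zero, one_smul]
  congr 1
  linear_combination (norm := noncomm_ring) hz

lemma single_obstruction_eq (f s t : A.A) :
    Matrix.single 0 1 (s * f - f * t) =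
      -(Matrix.single 0 1 f * diagonalHomotopy s t +
        diagonalHomotopy s t * Matrix.single 0 1 f) := by
  rw [sub_eq_add_neg, Matrix.single_add, ← Matrix.single_neg]
  simp [diagonalHomotopy, mul_sub, sub_mul]

theorem exists_series_contraction_of_matrix {δ φ β η ζ : Matrix (ZMod 2) (ZMod 2) A.A}
    (hδ : δ ∈ matrixGr A 1 0) (hφ : φ ∈ matrixGr A 0 1) (hβ : β ∈ matrixGr A 0 1)
    (hη : η ∈ matrixGr A (-1) 0) (hDδ : matrixD A δ = -(δ * δ))
    (hDφ : matrixD A φ = -(δ * φ + φ * δ)) (hDβ : matrixD A β = -(δ * β + β * δ))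
    (hDη : matrixD A η = 1 - (δ * η + η * δ) - (φ * β + β * φ)) (hζ : ζ = -(φ * η + η * φ))
    (hDζ : matrixD A ζ = ζ * δ - δ * ζ) (hφφ : φ * φ = 0) (hββ : β * β = 0) (hζφ : ζ * φ = 0)
    (hφζ : φ * ζ = 0) (hζζ : ζ * ζ = 0) :
    ∃ Φ ∈ seriesGr A 1 0, ∃ κ ∈ seriesGr A 0 1, coeff 0 Φ = δ ∧ seriesD A Φ = -(Φ * Φ) ∧
      seriesD A κ = X - Φ * κ - κ * Φ ∧ coeff 0 (κ * κ) = 0 := by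
  have X_comm (a : MatrixSeries A) : Commute X a := (commute_X a).symm
  have hζ_mem : ζ ∈ matrixGr A (-1) 1 := by
    rw [hζ]
    exact neg_mem (add_mem (mul_mem_matrixGr hφ hη) (mul_mem_matrixGr hη hφ))
  have hv : X * C ζ ∈ seriesGr A 0 0 := X_mul_mem_seriesGr (C_mem_seriesGr hζ_mem) rfl rfl
  have hκ' : C β + X * C η ∈ seriesGr A 0 1 :=
    add_mem (C_mem_seriesGr hβ) (X_mul_mem_seriesGr (C_mem_seriesGr hη) rfl rfl)
  have hDΦ := map_linear_twisting (D := seriesD A) (δ := C δ) (φ := C φ) seriesD_X_mul X_comm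
    (by rw [seriesD_C, hDδ, map_neg, map_mul])
    (by rw [seriesD_C, hDφ, map_neg, map_add, map_mul, map_mul])
    (by rw [← map_mul, hφφ, map_zero])
  have hDκ' := map_linear_contraction (D := seriesD A) (δ := C δ) (φ := C φ) (β := C β) (η := C η)
    (ζ := C ζ) seriesD_X_mul X_comm
    (by rw [seriesD_C, hDβ, map_neg, map_add, map_mul, map_mul])
    (by simp only [seriesD_C, hDη, map_sub, map_add, map_mul, map_one])
    (by simp only [hζ, map_neg, map_add, map_mul])
  have hDv := map_linear_obstruction (D := seriesD A) (δ := C δ) (φ := C φ) (ζ := C ζ)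
    seriesD_X_mul X_comm
    (by rw [seriesD_C, hDζ, map_sub, map_mul, map_mul])
    (by rw [← map_mul, hζφ, map_zero]) (by rw [← map_mul, hφζ, map_zero])
  have hvv : X * C ζ * (X * C ζ) = (0 : MatrixSeries A) := by
    rw [(X_comm (C ζ)).symm.mul_mul_mul_comm, ← map_mul, hζζ, map_zero, mul_zero]
  refine ⟨C δ + X * C φ, ?_, (C β + X * C η) * (1 + X * C ζ), ?_, by simp, hDΦ,
    map_contraction_mul_one_add (seriesD_mul_of_odd hκ') seriesD_one hDκ' hDv hvv, ?_⟩
  · exact add_mem (C_mem_seriesGr hδ) (X_mul_mem_seriesGr (C_mem_seriesGr hφ) rfl rfl)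
  · exact mul_mem_seriesGr hκ' (add_mem one_mem_seriesGr hv) rfl rfl
  · simpa using hββ

theorem DGA.HomotopyGaugeEquiv.exists_series_contraction (hx : A.IsMC x) (hy : A.IsMC y)
    (hxy : A.HomotopyGaugeEquiv x y) :
    ∃ Φ ∈ seriesGr A 1 0, ∃ κ ∈ seriesGr A 0 1, coeff 0 Φ = diagonalTwist x y ∧
      seriesD A Φ = -(Φ * Φ) ∧ seriesD A κ = X - Φ * κ - κ * Φ ∧ coeff 0 (κ * κ) = 0 := by
  obtain ⟨b, hb_mem, f, hf_mem, hb, hf, ⟨s, hs_mem, hs⟩, ⟨t, ht_mem, ht⟩⟩ := hxy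
  have single_mul_single {i j : ZMod 2} (hji : j ≠ i) (a c : A.A) :
      Matrix.single i j a * Matrix.single i j c = 0 :=
    Matrix.single_mul_single_of_ne a i j i hji c
  exact exists_series_contraction_of_matrix (diagonalTwist_mem_matrixGr hx.1 hy.1)
    (single_mem_matrixGr hf_mem 0 1) (single_mem_matrixGr hb_mem 1 0)
    (diagonalHomotopy_mem_matrixGr hs_mem ht_mem) (matrixD_diagonalTwist hx.2 hy.2)
    (matrixD_single_zero_one hf) (matrixD_single_one_zero hb) (matrixD_diagonalHomotopy hs ht)
    (single_obstruction_eq f s t)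
    (matrixD_single_obstruction (d_homotopy_obstruction hs_mem hf_mem hf hs ht))
    (single_mul_single one_ne_zero f f) (single_mul_single zero_ne_one b b)
    (single_mul_single one_ne_zero _ f) (single_mul_single one_ne_zero f _)
    (single_mul_single one_ne_zero _ _)

end Cone

section PathCochain

open PowerSeries

variable {k : Type} [CommRing k] {A : DGA k} {a T : MatrixSeries A} {e : ℤ}

lemma coeff_mul_apply_eq_sum_path (ha : a ∈ seriesGr A e 0) (b : MatrixSeries A) (n : ℕ)
    (i j : ZMod 2) : coeff n (a * b) i j = ∑ pq ∈ Finset.HasAntidiagonal.antidiagonal n,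
      coeff pq.1 a i (i + pq.1) * coeff pq.2 b (i + pq.1) j := by
  rw [coeff_mul, Matrix.sum_apply]
  refine Finset.sum_congr rfl fun pq _ => ?_
  rw [Matrix.mul_apply]
  refine Finset.sum_eq_single _ (fun l _ hl => ?_) fun h => absurd (Finset.mem_univ _) h
  rw [(ha pq.1 i l).2 fun h => hl ?_, zero_mul]
  rw [← zero_add (pq.1 : ZMod 2), ← h, CharTwo.add_cancel_left]

lemma swapMatrix_mul_apply (M : Matrix (ZMod 2) (ZMod 2) A.A) (i j : ZMod 2) :
    (swapMatrix A * M) i j = M (i + 1) j := by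
  obtain rfl | rfl : i = 0 ∨ i = 1 := by decide +revert
  all_goals simp [swapMatrix, add_mul, CharTwo.add_self_eq_zero]

lemma mul_swapMatrix_apply (M : Matrix (ZMod 2) (ZMod 2) A.A) (i j : ZMod 2) :
    (M * swapMatrix A) i j = M i (j + 1) := by
  obtain rfl | rfl : j = 0 ∨ j = 1 := by decide +revert
  all_goals simp [swapMatrix, mul_add, CharTwo.add_self_eq_zero]

lemma paritySign_pow_mul_paritySign_pow (i : ZMod 2) (p q : ℕ) :
    (-1) ^ (p * (p + q)) * (paritySign i ^ (p + 1) * paritySign (i + p) ^ (q + 1)) =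
      paritySign i ^ (p + q) := by
  have hp : (-1 : ℤ) ^ (p * (p + q)) * ((-1) ^ p) ^ (q + 1) = 1 := by
    have exponent : p * (p + q) + p * (q + 1) = p * (p + 1) + 2 * (p * q) := by ring
    rw [← pow_mul, ← pow_add, exponent]
    exact ((Nat.even_mul_succ_self p).add (even_two_mul _)).neg_one_pow
  rw [paritySign_add, paritySign_natCast]
  linear_combination paritySign i ^ (p + 1) * paritySign i ^ (q + 1) * hp
    + paritySign i ^ (p + q) * paritySign_mul_self i

/-- The values on alternating words of the cochain represented by the power series `T`.  The sign
moves the first index of a matrix entry, which carries a Koszul sign in `matrixD`, past the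
entry. -/
noncomputable def pathCoeff (T : MatrixSeries A) (n : ℕ) (i : ZMod 2) : A.A :=
  paritySign i ^ (n + 1) • coeff n T i (i + n)

lemma neg_one_pow_smul_pathCoeff_mul_pathCoeff (T : MatrixSeries A) (p q : ℕ) (i : ZMod 2) :
    (-1 : ℤ) ^ (p * (p + q)) • (pathCoeff T p i * pathCoeff T q (i + p)) =
      paritySign i ^ (p + q) • (coeff p T i (i + p) * coeff q T (i + p) (i + (p + q : ℕ))) := by
  rw [pathCoeff, pathCoeff, smul_mul_smul_comm, smul_smul, paritySign_pow_mul_paritySign_pow,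
    Nat.cast_add, add_assoc]

lemma d_pathCoeff_zero_add_mul_self (hT : T ∈ seriesGr A 1 0)
    (hDT : seriesD A T + T * T + X * (C (swapMatrix A) * T + T * C (swapMatrix A)) = 0)
    (i : ZMod 2) : A.d (pathCoeff T 0 i) + pathCoeff T 0 i * pathCoeff T 0 i = 0 := by
  have entry := congrArg (fun S : MatrixSeries A => coeff 0 S i i) hDT
  simp only [map_add, coeff_seriesD, coeff_zero_X_mul, map_zero, Matrix.add_apply,
    Matrix.zero_apply, matrixD_apply, coeff_mul_apply_eq_sum_path hT,
    Finset.Nat.antidiagonal_zero, Finset.sum_singleton, Nat.cast_zero, add_zero] at entry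
  rw [pathCoeff, zero_add, pow_one, Nat.cast_zero, add_zero, map_zsmul, smul_mul_smul_comm,
    paritySign_mul_self, one_smul, entry]

lemma isPathMCCochain_pathCoeff (hT : T ∈ seriesGr A 1 0)
    (hDT : seriesD A T + T * T + X * (C (swapMatrix A) * T + T * C (swapMatrix A)) = 0) :
    IsPathMCCochain A (pathCoeff T) where
  mem_gr n i := zsmul_mem (hT n i (i + n)).1 _
  mc_zero := d_pathCoeff_zero_add_mul_self hT hDT
  mc_succ n i := by
    have entry := congrArg (fun S : MatrixSeries A => coeff (n + 1) S i (i + (n + 1 : ℕ))) hDT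
    simp only [map_add, coeff_seriesD, coeff_succ_X_mul, coeff_C_mul, coeff_mul_C, map_zero,
      Matrix.add_apply, Matrix.zero_apply, matrixD_apply, swapMatrix_mul_apply,
      mul_swapMatrix_apply, coeff_mul_apply_eq_sum_path hT] at entry
    have d_term : A.d (pathCoeff T (n + 1) i) = paritySign i ^ (n + 1) •
        (paritySign i • A.d (coeff (n + 1) T i (i + (n + 1 : ℕ)))) := by
      rw [pathCoeff, map_zsmul, smul_smul, ← pow_succ]
    have left_face : (-1 : ℤ) ^ (n + 1) • pathCoeff T n (i + 1) = paritySign i ^ (n + 1) •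
        coeff n T (i + 1) (i + (n + 1 : ℕ)) := by
      rw [pathCoeff, smul_smul, ← mul_pow, paritySign_add, paritySign_one, mul_neg_one,
        neg_mul_neg, one_mul, Nat.cast_succ, add_assoc, add_comm 1]
    have right_face : pathCoeff T n i =
        paritySign i ^ (n + 1) • coeff n T i (i + (n + 1 : ℕ) + 1) := by
      rw [pathCoeff, Nat.cast_succ, ← add_assoc, CharTwo.add_cancel_right]
    have cup_term (pq) (hpq : pq ∈ Finset.HasAntidiagonal.antidiagonal (n + 1)) :
        (-1 : ℤ) ^ (pq.1 * (n + 1)) • (pathCoeff T pq.1 i * pathCoeff T pq.2 (i + pq.1)) =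
          paritySign i ^ (n + 1) • (coeff pq.1 T i (i + pq.1) *
            coeff pq.2 T (i + pq.1) (i + (n + 1 : ℕ))) := by
      rw [← Finset.HasAntidiagonal.mem_antidiagonal.mp hpq]
      exact neg_one_pow_smul_pathCoeff_mul_pathCoeff T pq.1 pq.2 i
    rw [d_term, left_face, right_face, Finset.sum_congr rfl cup_term, ← Finset.smul_sum,
      ← smul_add, ← smul_add, ← smul_add, ← smul_zero (paritySign i ^ (n + 1)), ← entry]
    congr 1
    abel

lemma pathCoeff_zero_zero {x y : A.A} (hT : coeff 0 T = diagonalTwist x y) :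
    pathCoeff T 0 0 = x := by
  simp [pathCoeff, hT, diagonalTwist, paritySign_zero]

lemma pathCoeff_zero_one {x y : A.A} (hT : coeff 0 T = diagonalTwist x y) :
    pathCoeff T 0 1 = y := by
  simp [pathCoeff, hT, diagonalTwist, paritySign_one]

end PathCochain

/-- **Theorem (algebraic Schlessinger-Stasheff).** Let `A` be any dg algebra over a
commutative ring `k`.  Two Maurer-Cartan elements of `A` are strongly homotopic
(`I`-homotopic, where `I` is the singular simplicial set of `[0,1]`) if and only if
they are homotopy gauge equivalent. -/
theorem mc_strongly_homotopic_iff_homotopy_gauge_equivalent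
    {k : Type} [CommRing k] (A : DGA k) (x₀ x₁ : A.A)
    (hx₀ : A.IsMC x₀) (hx₁ : A.IsMC x₁) :
    MCStronglyHomotopic A x₀ x₁ ↔ A.HomotopyGaugeEquiv x₀ x₁ := by
  rw [mcStronglyHomotopic_iff_exists_isWordMCCochain]
  constructor
  · rintro ⟨Z, hZ, rfl, rfl⟩
    simpa only [Matrix.vec_single_eq_const] using hZ.homotopyGaugeEquiv
  · intro hxy
    obtain ⟨Φ, hΦ, κ, hκ, hΦ0, hDΦ, hDκ, hκκ⟩ := hxy.exists_series_contraction hx₀ hx₁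
    obtain ⟨T, hT, hT0, hDT⟩ :=
      exists_seriesD_add_mul_self_add_swap_eq_zero hΦ hκ hDΦ hDκ hκκ
    have hT0 : PowerSeries.coeff 0 T = diagonalTwist x₀ x₁ := hT0.trans hΦ0
    exact ⟨_, (isPathMCCochain_pathCoeff hT hDT).isWordMCCochain,
      (alternatingCochain_zero _).trans (pathCoeff_zero_zero hT0),
      (alternatingCochain_zero _).trans (pathCoeff_zero_one hT0)⟩
end

section
/- Let A be a dg algebra concentrated in non-negative degrees that is flat as a module over its degree-zero part A⁰. Then every idempotent morphism in the homotopy category of cohesive A-modules splits. -/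
open DirectSum

/-! ## dg modules over a dg algebra, cohesive modules -/

/-- A (right) dg module over a dg algebra `A`: a graded `k`-module with a right
`A`-action and a square-zero degree-one differential satisfying the graded Leibniz
rule. -/
structure DGMod (k : Type) [CommRing k] (A : DGA k) : Type 1 where
  M : Type
  [addM : AddCommGroup M]
  [modM : Module k M]
  grM : ℤ → Submodule k M
  act : M → A.A → M
  act_addl : ∀ m m' a, act (m + m') a = act m a + act m' a
  act_addr : ∀ m a a', act m (a + a') = act m a + act m a'
  act_smul : ∀ (c : k) m a, act (c • m) a = c • act m a
  act_smul' : ∀ (c : k) m a, act m (c • a) = c • act m a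
  act_one : ∀ m, act m 1 = m
  act_mul : ∀ m a b, act (act m a) b = act m (a * b)
  act_gr : ∀ (i j : ℤ), ∀ m ∈ grM i, ∀ a ∈ A.gr j, act m a ∈ grM (i + j)
  dM : M → M
  dM_add : ∀ m m', dM (m + m') = dM m + dM m'
  dM_smul : ∀ (c : k) m, dM (c • m) = c • dM m
  dM_sq : ∀ m, dM (dM m) = 0
  dM_gr : ∀ (i : ℤ), ∀ m ∈ grM i, dM m ∈ grM (i + 1)
  leibnizM : ∀ (i : ℤ), ∀ m ∈ grM i, ∀ a,
    dM (act m a) = act (dM m) a + (((-1 : ℤˣ) ^ i : ℤˣ) : ℤ) • act m (A.d a)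

attribute [instance] DGMod.addM DGMod.modM

namespace DGMod

variable {k : Type} [CommRing k] {A : DGA k}

/-- A morphism of dg `A`-modules (closed, of degree zero). -/
def IsHom (M N : DGMod k A) (f : M.M → N.M) : Prop :=
  (∀ m m', f (m + m') = f m + f m') ∧ (∀ (c : k) m, f (c • m) = c • f m) ∧
  (∀ m a, f (M.act m a) = N.act (f m) a) ∧
  (∀ (i : ℤ), ∀ m ∈ M.grM i, f m ∈ N.grM i) ∧
  (∀ m, f (M.dM m) = N.dM (f m))

/-- An `A`-linear graded map of degree `r` (not necessarily closed). -/
def IsGradedMap (M N : DGMod k A) (r : ℤ) (h : M.M → N.M) : Prop :=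
  (∀ m m', h (m + m') = h m + h m') ∧ (∀ (c : k) m, h (c • m) = c • h m) ∧
  (∀ m a, h (M.act m a) = N.act (h m) a) ∧
  (∀ (i : ℤ), ∀ m ∈ M.grM i, h m ∈ N.grM (i + r))

/-- Two maps of dg `A`-modules are (chain) homotopic. -/
def Homotopic (M N : DGMod k A) (f g : M.M → N.M) : Prop :=
  ∃ h : M.M → N.M, IsGradedMap M N (-1) h ∧ ∀ m, f m - g m = N.dM (h m) + h (M.dM m)

/-- A dg `A`-module is free cohesive if its underlying graded module is free on finitely
many homogeneous generators (i.e. of the form `F' ⊗_{A⁰} A` with `F'` a bounded graded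
`A⁰`-module, free of finite rank in every degree). -/
def IsFreeCohesive (M : DGMod k A) : Prop :=
  ∃ (n : ℕ) (dv : Fin n → ℤ) (bas : Fin n → M.M),
    (∀ i, bas i ∈ M.grM (dv i)) ∧
    (∀ m : M.M, ∃! c : Fin n → A.A, m = ∑ i, M.act (bas i) (c i))

/-- A dg `A`-module `M` is cohesive: its underlying graded module `M^#` is isomorphic to
`E ⊗_{A⁰} A^#` for a graded right `A⁰`-module `E` which is finitely generated projective
in every degree and bounded.  Equivalently (as encoded here), `M^#` is the image of a
degree-preserving idempotent matrix `e` with entries in `A⁰` acting on a finitely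
generated free graded `A^#`-module, via a splitting `(p, ι)` of graded `A^#`-module
maps. -/
def IsCohesive (M : DGMod k A) : Prop :=
  ∃ (n : ℕ) (dv : Fin n → ℤ) (e : Fin n → Fin n → A.A)
    (p : M.M → (Fin n → A.A)) (ι : (Fin n → A.A) → M.M),
    (∀ i j, e i j ∈ A.gr 0) ∧ (∀ i j, dv i ≠ dv j → e i j = 0) ∧
    (∀ i j, ∑ l, e i l * e l j = e i j) ∧
    (∀ m m' i, p (m + m') i = p m i + p m' i) ∧
    (∀ m a i, p (M.act m a) i = p m i * a) ∧
    (∀ (g : ℤ), ∀ m ∈ M.grM g, ∀ i, p m i ∈ A.gr (g - dv i)) ∧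
    (∀ v v', ι (v + v') = ι v + ι v') ∧
    (∀ v a, ι (fun i => v i * a) = M.act (ι v) a) ∧
    (∀ (g : ℤ) (v : Fin n → A.A), (∀ i, v i ∈ A.gr (g - dv i)) → ι v ∈ M.grM g) ∧
    (∀ m, ι (p m) = m) ∧
    (∀ v i, p (ι v) i = ∑ l, e i l * v l)

end DGMod

/-- `A` is flat as a (right) module over its degree-zero part `A⁰`, expressed by the
equational criterion for flatness: every relation `Σ mᵢ rᵢ = 0` with `rᵢ ∈ A⁰` comes
from relations in `A⁰`. -/
def RightFlatOverDegreeZero {k : Type} [CommRing k] (A : DGA k) : Prop :=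
  ∀ (n : ℕ) (m : Fin n → A.A) (r : Fin n → A.A), (∀ i, r i ∈ A.gr 0) →
    (∑ i, m i * r i = 0) →
    ∃ (l : ℕ) (w : Fin l → A.A) (a : Fin l → Fin n → A.A),
      (∀ j i, a j i ∈ A.gr 0) ∧
      (∀ i, m i = ∑ j, w j * a j i) ∧
      (∀ j, ∑ i, a j i * r i = 0)

/-!
An idempotent `e` up to a homotopy `h` lifts, by obstruction theory, to polynomials `V = d + hX + ⋯`
and `P = e + ⋯` with coefficients in the graded endomorphisms of `M`, where `X` has degree `2`, such
that `V² = X(P² - P)` and `PV = VP`. At each order the obstruction is a cycle that is either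
off-diagonal with respect to `e` up to homotopy, hence equal to a commutator with `e`, or commutes
with `e` up to homotopy, hence is divisible by `2e - 1`, whose square is homotopic to `1`. The
coefficient of `Xⁿ` lowers degrees by about `2n`, so the process stops because `M` is bounded and
`A` vanishes in negative degrees.

On two copies of the power series `M⟦X⟧` the matrix `[[V, XP], [1 - P, -V]]` then squares to zero.
This dg module, a telescope of `e`, splits `e` up to homotopy. It has infinitely many generators,
but the identity is homotopic to a map through `M`, and this homotopy allows it to be cut off just
above the generator degrees of `M`, leaving a cohesive module.
-/

namespace IdempotentLifting

open Polynomial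

variable {R : Type*} [Ring R]

/-- The degree-`r` part of `R[X]` when `R` is graded by `𝒜` and `X` is given degree `2`. -/
def polyDegree (𝒜 : ℤ → AddSubgroup R) (r : ℤ) : AddSubgroup R[X] where
  carrier := {S | ∀ n : ℕ, S.coeff n ∈ 𝒜 (r - 2 * n)}
  add_mem' hS hT n := by simpa using add_mem (hS n) (hT n)
  zero_mem' n := by simp
  neg_mem' hS n := by simpa using hS n

/-- `p` is an idempotent up to the homotopy `h` with respect to the differential `[d, -]` on the
graded ring `R`. The element `d` itself need not be homogeneous: the differential of a dg module is
additive but not linear over the dg algebra, whereas its commutators with linear maps are. -/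
structure IsHomotopyIdempotent (𝒜 : ℤ → AddSubgroup R) (d p h : R) : Prop where
  commutator_mem : ∀ {r f}, f ∈ 𝒜 r → d * f - r.negOnePow • (f * d) ∈ 𝒜 (r + 1)
  sq_eq_zero : d * d = 0
  comm : d * p = p * d
  mem_zero : p ∈ 𝒜 0
  homotopy_mem : h ∈ 𝒜 (-1)
  homotopy : d * h + h * d = p * p - p

/-- A deformation over `R[X]`, homogeneous for `deg X = 2`, of the pair `(d, p)`. -/
structure IsDeformation (𝒜 : ℤ → AddSubgroup R) (d p : R) (V P : R[X]) : Prop where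
  coeff_zero_left : V.coeff 0 = d
  coeff_zero_right : P.coeff 0 = p
  sub_mem_one : V - C d ∈ polyDegree 𝒜 1
  mem_zero : P ∈ polyDegree 𝒜 0

/-- The obstruction to `V² = X (P² - P)`. -/
noncomputable def curvature (V P : R[X]) : R[X] := V * V - X * (P * P - P)

theorem commutator_curvature (V P : R[X]) :
    V * curvature V P - curvature V P * V = X * ((P * V - V * P) * P + P * (P * V - V * P)
      - (P * V - V * P)) := by
  rw [curvature]
  linear_combination (norm := noncomm_ring) X_mul (p := V) * (P * P - P)

theorem anticommutator_commutator (V P : R[X]) :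
    (P * V - V * P) * V + V * (P * V - V * P) = P * curvature V P - curvature V P * P := by
  rw [curvature]
  linear_combination (norm := noncomm_ring) -X_mul (p := P) * (P * P - P)

theorem curvature_add (V P : R[X]) (z y : R[X]) (m n : ℕ) :
    curvature (V + X ^ m * z) (P + X ^ n * y) = curvature V P
      + X ^ m * (V * z + z * V + z * (X ^ m * z))
      - X ^ (n + 1) * (P * y + y * P - y + y * (X ^ n * y)) := by
  have hV : X ^ m * V = V * X ^ m := X_pow_mul
  have hP : X ^ n * P = P * X ^ n := X_pow_mul
  rw [curvature, curvature, pow_succ']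
  linear_combination (norm := noncomm_ring) -(hV * z) + X * hP * y

theorem commutator_add (V P : R[X]) (z y : R[X]) (m n : ℕ) :
    (P + X ^ n * y) * (V + X ^ m * z) - (V + X ^ m * z) * (P + X ^ n * y) = (P * V - V * P)
      + X ^ m * (P * z - z * P) + X ^ n * (y * V - V * y)
      + X ^ m * X ^ n * (y * z - z * y) := by
  have hV : X ^ n * V = V * X ^ n := X_pow_mul
  have hP : X ^ m * P = P * X ^ m := X_pow_mul
  have hz : X ^ n * z = z * X ^ n := X_pow_mul
  have hy : X ^ m * y = y * X ^ m := X_pow_mul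
  have hX : (X ^ n * X ^ m : R[X]) = X ^ m * X ^ n := X_pow_mul
  linear_combination (norm := noncomm_ring)
    hV * y - hP * z - X ^ n * hy * z + X ^ m * hz * y + hX * y * z

theorem coeff_X_pow_mul_mul (S T : R[X]) (n : ℕ) :
    (X ^ n * S * T).coeff n = S.coeff 0 * T.coeff 0 := by
  simp [mul_assoc, coeff_X_pow_mul', mul_coeff_zero]

theorem coeff_mul_X_pow_mul (S T : R[X]) (n : ℕ) :
    (T * (X ^ n * S)).coeff n = T.coeff 0 * S.coeff 0 := by
  rw [X_pow_mul, ← mul_assoc, ← X_pow_mul, ← mul_one (X ^ n * _), coeff_X_pow_mul_mul]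
  simp [mul_coeff_zero]

theorem X_pow_dvd_mul_left {S : R[X]} {n : ℕ} (T : R[X]) (h : X ^ n ∣ S) : X ^ n ∣ T * S := by
  obtain ⟨S, rfl⟩ := h
  exact ⟨T * S, by rw [← mul_assoc, ← X_pow_mul, mul_assoc]⟩

theorem X_pow_succ_dvd_X_pow_mul {S : R[X]} (n : ℕ) (hS : S.coeff 0 = 0) :
    X ^ (n + 1) ∣ X ^ n * S := by
  rw [pow_succ]
  exact mul_dvd_mul_left _ (X_dvd_iff.2 hS)

section Graded

variable {𝒜 : ℤ → AddSubgroup R}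

theorem X_mul_mem_polyDegree {r t : ℤ} {S : R[X]} (h : r + 2 = t) (hS : S ∈ polyDegree 𝒜 r) :
    X * S ∈ polyDegree 𝒜 t := by
  rintro (_ | n)
  · simp
  · rw [coeff_X_mul]
    convert hS n using 2
    push_cast
    linarith

theorem X_pow_mul_C_mem_polyDegree {r : ℤ} {z : R} {n : ℕ} (hz : z ∈ 𝒜 (r - 2 * n)) :
    X ^ n * C z ∈ polyDegree 𝒜 r := by
  intro m
  rw [X_pow_mul, coeff_C_mul_X_pow]
  split_ifs with h
  · exact h ▸ hz
  · exact zero_mem _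

theorem coeff_zero_mem_of_X_pow_mul_mem {r s : ℤ} {n : ℕ} {S : R[X]} (h : r - 2 * n = s)
    (hS : X ^ n * S ∈ polyDegree 𝒜 r) : S.coeff 0 ∈ 𝒜 s := by
  simpa [coeff_X_pow_mul', h] using hS n

theorem eq_zero_of_mem_polyDegree {r c : ℤ} {n : ℕ} {S : R[X]} (h𝒜 : ∀ s < c, 𝒜 s = ⊥)
    (hS : S ∈ polyDegree 𝒜 r) (hdvd : X ^ n ∣ S) (hn : r - 2 * n < c) : S = 0 := by
  ext m
  rcases lt_or_ge m n with hm | hm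
  · exact X_pow_dvd_iff.1 hdvd m hm
  · simpa [h𝒜 (r - 2 * m) (by omega)] using hS m

variable [SetLike.GradedMul 𝒜]

theorem mul_mem_of_add_eq {r s t : ℤ} {f g : R} (h : r + s = t) (hf : f ∈ 𝒜 r) (hg : g ∈ 𝒜 s) :
    f * g ∈ 𝒜 t :=
  h ▸ SetLike.mul_mem_graded hf hg

instance : SetLike.GradedMul (polyDegree 𝒜) where
  mul_mem r s S T hS hT n := by
    rw [coeff_mul]
    refine sum_mem fun ij hij => mul_mem_of_add_eq ?_ (hS ij.1) (hT ij.2)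
    rw [← Finset.HasAntidiagonal.mem_antidiagonal.1 hij]
    push_cast
    ring

end Graded

namespace IsHomotopyIdempotent

variable {𝒜 : ℤ → AddSubgroup R} {d p h : R}

theorem anticommutator_mem (H : IsHomotopyIdempotent 𝒜 d p h) {r : ℤ} {f : R} (hr : Odd r)
    (hf : f ∈ 𝒜 r) : d * f + f * d ∈ 𝒜 (r + 1) := by
  simpa [Int.negOnePow_odd r hr] using H.commutator_mem hf

theorem even_commutator_mem (H : IsHomotopyIdempotent 𝒜 d p h) {r : ℤ} {f : R} (hr : Even r)
    (hf : f ∈ 𝒜 r) : d * f - f * d ∈ 𝒜 (r + 1) := by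
  simpa [Int.negOnePow_even r hr] using H.commutator_mem hf

variable [SetLike.GradedMul 𝒜]

/- The hypothesis on `g` says that `c` is off-diagonal with respect to `p` up to homotopy, so that
`[p, [p, c]]` is homotopic to `c`. -/
theorem exists_commutator_correction (H : IsHomotopyIdempotent 𝒜 d p h) {r : ℤ} {c g : R}
    (hc : c ∈ 𝒜 r) (hg : g ∈ 𝒜 (r - 1)) (hdc : c * d + d * c = 0)
    (hdg : d * g - g * d = c * p + p * c - c) :
    ∃ z ∈ 𝒜 r, ∃ y ∈ 𝒜 (r - 1),
      d * z + z * d = 0 ∧ c + (p * z - z * p) + (y * d - d * y) = 0 := by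
  have hd := H.comm
  have hh := H.homotopy
  have hhc : h * c ∈ 𝒜 (r - 1) := mul_mem_of_add_eq (by ring) H.homotopy_mem hc
  have hch : c * h ∈ 𝒜 (r - 1) := mul_mem_of_add_eq (by ring) hc H.homotopy_mem
  have hpgp : p * g * p ∈ 𝒜 (r - 1) :=
    mul_mem_of_add_eq (add_zero _) (mul_mem_of_add_eq (zero_add _) H.mem_zero hg) H.mem_zero
  have hhcp : h * c * p ∈ 𝒜 (r - 1) := mul_mem_of_add_eq (add_zero _) hhc H.mem_zero
  have hpch : p * (c * h) ∈ 𝒜 (r - 1) := mul_mem_of_add_eq (zero_add _) H.mem_zero hch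
  refine ⟨c * p - p * c, sub_mem (mul_mem_of_add_eq (add_zero _) hc H.mem_zero)
    (mul_mem_of_add_eq (zero_add _) H.mem_zero hc),
    c * h - h * c - g + (2 : ℕ) • (p * g * p - h * c * p + p * (c * h)),
    add_mem (sub_mem (sub_mem hch hhc) hg)
      (nsmul_mem (add_mem (sub_mem hpgp hhcp) hpch) 2), ?_, ?_⟩
  · linear_combination (norm := noncomm_ring) hdc * p - p * hdc - hd * c - c * hd
  · linear_combination (norm := noncomm_ring) hdg + hh * c - h * hdc + c * hh - hdc * h
      - 2 * (p * g * hd) - 2 * (hd * g * p) - 2 * (p * hdg * p) + 2 * (h * c * hd)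
      + 2 * (hh * c * p) - 2 * (h * hdc * p) + 2 * (p * c * hh) - 2 * (p * hdc * h)
      - 2 * (hd * c * h)

/- The hypothesis on `g` says that `c` commutes with `p` up to homotopy, and multiplication by
`2p - 1` squares to the identity up to homotopy. -/
theorem exists_curvature_correction (H : IsHomotopyIdempotent 𝒜 d p h) {r : ℤ} {c g : R}
    (hc : c ∈ 𝒜 r) (hg : g ∈ 𝒜 (r - 1)) (hdc : d * c - c * d = 0)
    (hdg : g * d + d * g = p * c - c * p) :
    ∃ z ∈ 𝒜 r, ∃ y ∈ 𝒜 (r - 1),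
      d * z - z * d = 0 ∧ c + (d * y + y * d) - (p * z + z * p - z) = 0 := by
  have hd := H.comm
  have hh := H.homotopy
  have hpc : p * c ∈ 𝒜 r := mul_mem_of_add_eq (zero_add _) H.mem_zero hc
  have hpg : p * g ∈ 𝒜 (r - 1) := mul_mem_of_add_eq (zero_add _) H.mem_zero hg
  have hhc : h * c ∈ 𝒜 (r - 1) := mul_mem_of_add_eq (by ring) H.homotopy_mem hc
  refine ⟨2 • (p * c) - c, sub_mem (nsmul_mem hpc 2) hc,
    4 • (h * c) - (2 • (p * g) - g),
    sub_mem (nsmul_mem hhc 4) (sub_mem (nsmul_mem hpg 2) hg), ?_, ?_⟩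
  · linear_combination (norm := noncomm_ring) -hdc + 2 * (hd * c) + 2 * (p * hdc)
  · linear_combination (norm := noncomm_ring)
      hdg - 2 * (p * hdg) - 2 * (hd * g) + 4 * (hh * c) - 4 * (h * hdc)

end IsHomotopyIdempotent

namespace IsDeformation

variable {𝒜 : ℤ → AddSubgroup R} {d p h : R} {V P : R[X]}

theorem add (hVP : IsDeformation 𝒜 d p V P) {m n : ℕ} (hm : m ≠ 0) (hn : n ≠ 0) {z y : R}
    (hz : z ∈ 𝒜 (1 - 2 * m)) (hy : y ∈ 𝒜 (0 - 2 * n)) :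
    IsDeformation 𝒜 d p (V + X ^ m * C z) (P + X ^ n * C y) where
  coeff_zero_left := by simp [hVP.coeff_zero_left, hm.symm]
  coeff_zero_right := by simp [hVP.coeff_zero_right, hn.symm]
  sub_mem_one := by
    rw [add_sub_right_comm]
    exact add_mem hVP.sub_mem_one (X_pow_mul_C_mem_polyDegree hz)
  mem_zero := add_mem hVP.mem_zero (X_pow_mul_C_mem_polyDegree hy)

theorem exists_first_order (H : IsHomotopyIdempotent 𝒜 d p h) :
    ∃ V P, IsDeformation 𝒜 d p V P ∧ X ^ 2 ∣ curvature V P ∧ X ^ 1 ∣ P * V - V * P := by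
  have hd : (C d * C d : R[X]) = 0 := by rw [← C_mul, H.sq_eq_zero, C_0]
  have hp : (C d * C p : R[X]) = C p * C d := by rw [← C_mul, H.comm, C_mul]
  have hh : (C d * C h + C h * C d : R[X]) = C p * C p - C p := by
    simp only [← C_mul, ← C_add, ← C_sub, H.homotopy]
  have const : IsDeformation 𝒜 d p (C d) (C p) :=
    ⟨coeff_C_zero, coeff_C_zero, by simp, by
      simpa using X_pow_mul_C_mem_polyDegree (n := 0) (r := 0) (by simpa using H.mem_zero)⟩
  refine ⟨_, _, const.add one_ne_zero one_ne_zero (z := h) (y := 0)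
    (by simpa using H.homotopy_mem) (zero_mem _), ⟨C h * C h, ?_⟩, ?_⟩
  · rw [curvature_add, curvature]
    have hX : C h * X = X * C h := (X_mul_C h).symm
    simp only [C_0, pow_one, mul_zero, zero_mul, add_zero, sub_zero]
    linear_combination (norm := noncomm_ring) hd + X * hh + X * hX * C h
  · rw [commutator_add, ← hp]
    simp [dvd_mul_right]

variable [SetLike.GradedMul 𝒜]

theorem curvature_mem (H : IsHomotopyIdempotent 𝒜 d p h) (hVP : IsDeformation 𝒜 d p V P) :
    curvature V P ∈ polyDegree 𝒜 2 := by
  have hd : (C d * C d : R[X]) = 0 := by rw [← C_mul, H.sq_eq_zero, C_0]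
  have expand : curvature V P = (C d * (V - C d) + (V - C d) * C d) + (V - C d) * (V - C d)
      - X * (P * P - P) := by
    rw [curvature]
    linear_combination (norm := noncomm_ring) hd
  rw [expand]
  refine sub_mem (add_mem (fun n => ?_) (mul_mem_of_add_eq (by norm_num) hVP.sub_mem_one
    hVP.sub_mem_one)) (X_mul_mem_polyDegree (zero_add 2)
      (sub_mem (mul_mem_of_add_eq (zero_add 0) hVP.mem_zero hVP.mem_zero) hVP.mem_zero))
  rw [coeff_add, coeff_C_mul, coeff_mul_C]
  have odd : Odd (1 - 2 * n : ℤ) := ⟨-n, by ring⟩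
  convert H.anticommutator_mem odd (hVP.sub_mem_one n) using 2
  ring

theorem commutator_mem (H : IsHomotopyIdempotent 𝒜 d p h) (hVP : IsDeformation 𝒜 d p V P) :
    P * V - V * P ∈ polyDegree 𝒜 1 := by
  have expand : P * V - V * P
      = (P * (V - C d) - (V - C d) * P) - (C d * P - P * C d) := by noncomm_ring
  rw [expand]
  refine sub_mem (sub_mem (mul_mem_of_add_eq (zero_add 1) hVP.mem_zero hVP.sub_mem_one)
    (mul_mem_of_add_eq (add_zero 1) hVP.sub_mem_one hVP.mem_zero)) fun n => ?_
  rw [coeff_sub, coeff_C_mul, coeff_mul_C]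
  have even : Even (0 - 2 * n : ℤ) := ⟨-n, by ring⟩
  convert H.even_commutator_mem even (hVP.mem_zero n) using 2
  ring

theorem exists_commutator_step (H : IsHomotopyIdempotent 𝒜 d p h) (hVP : IsDeformation 𝒜 d p V P)
    {n : ℕ} (hn : n ≠ 0) (hF : X ^ (n + 1) ∣ curvature V P) (hG : X ^ n ∣ P * V - V * P) :
    ∃ V' P', IsDeformation 𝒜 d p V' P' ∧ X ^ (n + 1) ∣ curvature V' P' ∧
      X ^ (n + 1) ∣ P' * V' - V' * P' := by
  obtain ⟨F, hF'⟩ := id hF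
  obtain ⟨G, hG'⟩ := id hG
  have hFmem : F.coeff 0 ∈ 𝒜 (1 - 2 * n - 1) :=
    coeff_zero_mem_of_X_pow_mul_mem (by push_cast; ring) (hF' ▸ hVP.curvature_mem H)
  have hGmem : G.coeff 0 ∈ 𝒜 (1 - 2 * n) :=
    coeff_zero_mem_of_X_pow_mul_mem rfl (hG' ▸ hVP.commutator_mem H)
  have hdG : G.coeff 0 * d + d * G.coeff 0 = 0 := by
    have := congrArg (coeff · n) (anticommutator_commutator V P)
    have hPF : (P * curvature V P - curvature V P * P).coeff n = 0 :=
      X_pow_dvd_iff.1 (dvd_sub (X_pow_dvd_mul_left P hF) (dvd_mul_of_dvd_left hF P)) n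
        n.lt_succ_self
    simpa [hPF, hG', coeff_X_pow_mul_mul, coeff_mul_X_pow_mul, hVP.coeff_zero_left] using this
  have hdF : d * F.coeff 0 - F.coeff 0 * d
      = G.coeff 0 * p + p * G.coeff 0 - G.coeff 0 := by
    have := congrArg (coeff · (n + 1)) (commutator_curvature V P)
    simpa [hF', hG', coeff_X_pow_mul', coeff_X_pow_mul_mul, coeff_mul_X_pow_mul,
      hVP.coeff_zero_left, hVP.coeff_zero_right] using this
  obtain ⟨z, hz, y, hy, hdz, hcorr⟩ := H.exists_commutator_correction hGmem hFmem hdG hdF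
  refine ⟨_, _, hVP.add hn hn hz (by convert hy using 1; ring_nf), ?_, ?_⟩
  · rw [curvature_add, hF']
    refine dvd_sub (dvd_add (dvd_mul_right ..) (X_pow_succ_dvd_X_pow_mul n ?_)) (dvd_mul_right ..)
    simpa [mul_coeff_zero, hn.symm, hVP.coeff_zero_left] using hdz
  · rw [commutator_add, hG', ← mul_add, ← mul_add, mul_assoc, ← mul_add]
    refine X_pow_succ_dvd_X_pow_mul n ?_
    simpa [mul_coeff_zero, hn.symm, hVP.coeff_zero_left, hVP.coeff_zero_right] using hcorr

theorem exists_curvature_step (H : IsHomotopyIdempotent 𝒜 d p h) (hVP : IsDeformation 𝒜 d p V P)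
    {n : ℕ} (hn : n ≠ 0) (hF : X ^ (n + 1) ∣ curvature V P) (hG : X ^ (n + 1) ∣ P * V - V * P) :
    ∃ V' P', IsDeformation 𝒜 d p V' P' ∧ X ^ (n + 2) ∣ curvature V' P' ∧
      X ^ (n + 1) ∣ P' * V' - V' * P' := by
  obtain ⟨F, hF'⟩ := id hF
  obtain ⟨G, hG'⟩ := id hG
  have hFmem : F.coeff 0 ∈ 𝒜 (0 - 2 * n) :=
    coeff_zero_mem_of_X_pow_mul_mem (by push_cast; ring) (hF' ▸ hVP.curvature_mem H)
  have hGmem : G.coeff 0 ∈ 𝒜 (0 - 2 * n - 1) :=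
    coeff_zero_mem_of_X_pow_mul_mem (by push_cast; ring) (hG' ▸ hVP.commutator_mem H)
  have hdF : d * F.coeff 0 - F.coeff 0 * d = 0 := by
    have := congrArg (coeff · (n + 1)) (commutator_curvature V P)
    have hGP : ((P * V - V * P) * P + P * (P * V - V * P) - (P * V - V * P)).coeff n = 0 :=
      X_pow_dvd_iff.1 (dvd_sub (dvd_add (dvd_mul_of_dvd_left hG P) (X_pow_dvd_mul_left P hG)) hG)
        n n.lt_succ_self
    rw [coeff_X_mul, hGP] at this
    simpa [hF', coeff_X_pow_mul_mul, coeff_mul_X_pow_mul, hVP.coeff_zero_left] using this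
  have hdG : G.coeff 0 * d + d * G.coeff 0 = p * F.coeff 0 - F.coeff 0 * p := by
    have := congrArg (coeff · (n + 1)) (anticommutator_commutator V P)
    simpa [hF', hG', coeff_X_pow_mul', coeff_X_pow_mul_mul, coeff_mul_X_pow_mul,
      hVP.coeff_zero_left, hVP.coeff_zero_right] using this
  obtain ⟨y, hy, z, hz, hdy, hcorr⟩ := H.exists_curvature_correction hFmem hGmem hdF hdG
  have hz' : z ∈ 𝒜 (1 - 2 * ↑(n + 1)) := by
    convert hz using 1
    push_cast
    ring_nf
  refine ⟨_, _, hVP.add n.succ_ne_zero hn hz' hy, ?_, ?_⟩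
  · rw [curvature_add, hF', ← mul_add, ← mul_sub]
    refine X_pow_succ_dvd_X_pow_mul (n + 1) ?_
    simpa [mul_coeff_zero, hn.symm, hVP.coeff_zero_left, hVP.coeff_zero_right] using hcorr
  · rw [commutator_add, hG']
    refine dvd_add (dvd_add (dvd_add (dvd_mul_right ..) (dvd_mul_right ..))
      (X_pow_succ_dvd_X_pow_mul n ?_)) (by rw [mul_assoc]; exact dvd_mul_right ..)
    rw [← neg_eq_zero]
    simpa [mul_coeff_zero, hVP.coeff_zero_left] using hdy

theorem exists_order (H : IsHomotopyIdempotent 𝒜 d p h) (n : ℕ) :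
    ∃ V P, IsDeformation 𝒜 d p V P ∧ X ^ (n + 2) ∣ curvature V P ∧
      X ^ (n + 1) ∣ P * V - V * P := by
  induction n with
  | zero => exact exists_first_order H
  | succ n ih =>
    obtain ⟨V, P, hVP, hF, hG⟩ := ih
    obtain ⟨V, P, hVP, hF, hG⟩ := hVP.exists_commutator_step H n.succ_ne_zero hF hG
    exact hVP.exists_curvature_step H n.succ_ne_zero hF hG

theorem exists_of_bounded (H : IsHomotopyIdempotent 𝒜 d p h) {c : ℤ} (h𝒜 : ∀ r < c, 𝒜 r = ⊥) :
    ∃ V P, IsDeformation 𝒜 d p V P ∧ V * V = X * (P * P - P) ∧ P * V = V * P := by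
  obtain ⟨V, P, hVP, hF, hG⟩ := exists_order H (1 - c).toNat
  refine ⟨V, P, hVP, sub_eq_zero.1 ?_, sub_eq_zero.1 ?_⟩
  · exact eq_zero_of_mem_polyDegree h𝒜 (hVP.curvature_mem H) hF (by push_cast; omega)
  · exact eq_zero_of_mem_polyDegree h𝒜 (hVP.commutator_mem H) hG (by push_cast; omega)

end IsDeformation
end IdempotentLifting

namespace DGMod

variable {k : Type} [CommRing k] {A : DGA k}

section Basic

variable (T : DGMod k A)

/-- The right action of `A` on `T` as a bilinear map. -/
def actHom : T.M →ₗ[k] A.A →ₗ[k] T.M :=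
  LinearMap.mk₂ k T.act T.act_addl T.act_smul T.act_addr fun c m a => T.act_smul' c m a

/-- The differential of `T` as a `k`-linear map. -/
def dHom : Module.End k T.M where
  toFun := T.dM
  map_add' := T.dM_add
  map_smul' := T.dM_smul

@[simp] theorem actHom_apply (m : T.M) (a : A.A) : T.actHom m a = T.act m a := rfl

@[simp] theorem dHom_apply (m : T.M) : T.dHom m = T.dM m := rfl

@[simp] theorem zero_act (a : A.A) : T.act 0 a = 0 := T.actHom.map_zero₂ a

theorem sub_act (m m' : T.M) (a : A.A) : T.act (m - m') a = T.act m a - T.act m' a :=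
  T.actHom.map_sub₂ m m' a

theorem neg_act (m : T.M) (a : A.A) : T.act (-m) a = -T.act m a := T.actHom.map_neg₂ m a

theorem zsmul_act (z : ℤ) (m : T.M) (a : A.A) : T.act (z • m) a = z • T.act m a :=
  map_zsmul (T.actHom.flip a) z m

theorem smul_eq_act (c : k) (m : T.M) : c • m = T.act m (c • 1) := by
  rw [act_smul', act_one]

theorem dHom_mul_dHom : T.dHom * T.dHom = 0 := LinearMap.ext T.dM_sq

end Basic

namespace IsGradedMap

variable {S T : DGMod k A} {r : ℤ} {f : S.M → T.M}

/-- A graded map of dg modules as a `k`-linear map. -/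
def toLinearMap (hf : IsGradedMap S T r f) : S.M →ₗ[k] T.M where
  toFun := f
  map_add' := hf.1
  map_smul' := hf.2.1

theorem map_act (hf : IsGradedMap S T r f) (m : S.M) (a : A.A) : f (S.act m a) = T.act (f m) a :=
  hf.2.2.1 m a

theorem map_mem (hf : IsGradedMap S T r f) {i : ℤ} {m : S.M} (hm : m ∈ S.grM i) :
    f m ∈ T.grM (i + r) :=
  hf.2.2.2 i m hm

end IsGradedMap

theorem IsHom.isGradedMap {S T : DGMod k A} {f : S.M → T.M} (hf : IsHom S T f) :
    IsGradedMap S T 0 f :=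
  ⟨hf.1, hf.2.1, hf.2.2.1, fun i m hm => (add_zero i).symm ▸ hf.2.2.2.1 i m hm⟩

theorem Homotopic.refl {S T : DGMod k A} (f : S.M → T.M) : Homotopic S T f f :=
  ⟨0, ⟨fun _ _ => (add_zero 0).symm, fun c _ => (smul_zero c).symm, fun _ a => (T.zero_act a).symm,
    fun _ _ _ => zero_mem _⟩, fun m => by simpa using T.dHom.map_zero.symm⟩

section GradedEnd

/-- The `A`-linear endomorphisms of `T` that raise degrees by `r`. -/
def gradedEnd (T : DGMod k A) (r : ℤ) : AddSubgroup (Module.End k T.M) where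
  carrier := {f | IsGradedMap T T r f}
  add_mem' {f g} hf hg := ⟨map_add _, map_smul _,
    fun m a => by simp [hf.map_act, hg.map_act, T.act_addl],
    fun i m hm => add_mem (hf.map_mem hm) (hg.map_mem hm)⟩
  zero_mem' := ⟨map_add _, map_smul _, fun _ a => (T.zero_act a).symm, fun _ _ _ => zero_mem _⟩
  neg_mem' {f} hf := ⟨map_add _, map_smul _, fun m a => by simp [hf.map_act, T.neg_act],
    fun i m hm => neg_mem (hf.map_mem hm)⟩

variable {T : DGMod k A}

instance : SetLike.GradedMonoid T.gradedEnd where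
  one_mem := ⟨map_add _, map_smul _, fun _ _ => rfl, fun i _ hm => (add_zero i).symm ▸ hm⟩
  mul_mem r s f g hf hg := ⟨map_add _, map_smul _,
    fun m a => by
      rw [Module.End.mul_apply, hg.map_act, hf.map_act, Module.End.mul_apply],
    fun i m hm => by
      rw [add_comm r s, ← add_assoc]
      exact hf.map_mem (hg.map_mem hm)⟩

theorem commutator_dHom_mem_gradedEnd (hT : ⨆ i, T.grM i = ⊤) {r : ℤ} {f : Module.End k T.M}
    (hf : f ∈ T.gradedEnd r) :
    T.dHom * f - r.negOnePow • (f * T.dHom) ∈ T.gradedEnd (r + 1) := by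
  set g := T.dHom * f - r.negOnePow • (f * T.dHom)
  have g_apply (m : T.M) : g m = T.dM (f m) - r.negOnePow • f (T.dM m) := rfl
  refine ⟨map_add _, map_smul _, fun m a => ?_, fun i m hm => ?_⟩
  · suffices ⨆ i, T.grM i ≤ LinearMap.eqLocus (g ∘ₗ T.actHom.flip a) (T.actHom.flip a ∘ₗ g) from
      this (hT ▸ Submodule.mem_top)
    refine iSup_le fun i m hm => ?_
    have sign : (((-1 : ℤˣ) ^ (i + r) : ℤˣ) : ℤ)
        = (r.negOnePow : ℤ) * (((-1 : ℤˣ) ^ i : ℤˣ) : ℤ) := by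
      rw [← Units.val_mul, add_comm, zpow_add, Int.negOnePow_def]
    simp only [LinearMap.mem_eqLocus, LinearMap.comp_apply, LinearMap.flip_apply, actHom_apply,
      g_apply, hf.map_act, T.leibnizM (i + r) _ (hf.map_mem hm), T.leibnizM i m hm, sign, sub_act,
      map_add, map_zsmul, zsmul_act, Units.smul_def]
    module
  · rw [g_apply]
    refine sub_mem ?_ (zsmul_mem ?_ _)
    · rw [← add_assoc]
      exact T.dM_gr _ _ (hf.map_mem hm)
    · rw [add_comm r, ← add_assoc]
      exact hf.map_mem (T.dM_gr i m hm)

end GradedEnd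

section Filtration

variable (T : DGMod k A)

/-- The submodule of `T` generated over `A` by the homogeneous elements of degree at most `c`. -/
def filtration (c : ℤ) : Submodule k T.M :=
  Submodule.span k {x | ∃ i ≤ c, ∃ m ∈ T.grM i, ∃ a, T.act m a = x}

variable {T} {c : ℤ}

theorem filtration_le {S : Submodule k T.M}
    (h : ∀ i ≤ c, ∀ m ∈ T.grM i, ∀ a, T.act m a ∈ S) : T.filtration c ≤ S :=
  Submodule.span_le.2 fun _ ⟨i, hi, m, hm, a, hx⟩ => hx ▸ h i hi m hm a

theorem act_mem_filtration_of_mem_grM {i : ℤ} (hi : i ≤ c) {m : T.M} (hm : m ∈ T.grM i) (a : A.A) :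
    T.act m a ∈ T.filtration c :=
  Submodule.subset_span ⟨i, hi, m, hm, a, rfl⟩

theorem filtration_mono : Monotone T.filtration := fun _ _ h =>
  filtration_le fun _ hi _ hm a => act_mem_filtration_of_mem_grM (hi.trans h) hm a

theorem act_mem_filtration {x : T.M} (hx : x ∈ T.filtration c) (a : A.A) :
    T.act x a ∈ T.filtration c := by
  suffices T.filtration c ≤ (T.filtration c).comap (T.actHom.flip a) from this hx
  refine filtration_le fun i hi m hm b => ?_
  simpa [T.act_mul] using act_mem_filtration_of_mem_grM hi hm (b * a)

theorem dM_mem_filtration {x : T.M} (hx : x ∈ T.filtration c) : T.dM x ∈ T.filtration (c + 1) := by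
  suffices T.filtration c ≤ (T.filtration (c + 1)).comap T.dHom from this hx
  refine filtration_le fun i hi m hm a => ?_
  rw [Submodule.mem_comap, dHom_apply, T.leibnizM i m hm]
  exact add_mem (act_mem_filtration_of_mem_grM (by omega) (T.dM_gr i m hm) a)
    (zsmul_mem (act_mem_filtration_of_mem_grM (by omega) hm _) _)

theorem dM_act_sub_mem_filtration {x : T.M} (hx : x ∈ T.filtration c) (b : A.A) :
    T.dM (T.act x b) - T.act (T.dM x) b ∈ T.filtration c := by
  suffices T.filtration c ≤ (T.filtration c).comap
      (T.dHom ∘ₗ T.actHom.flip b - T.actHom.flip b ∘ₗ T.dHom) from this hx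
  refine filtration_le fun i hi m hm a => ?_
  have expand : T.dM (T.act (T.act m a) b) - T.act (T.dM (T.act m a)) b
      = (((-1 : ℤˣ) ^ i : ℤˣ) : ℤ) • (T.act m (A.d (a * b)) - T.act (T.act m (A.d a)) b) := by
    rw [T.act_mul, T.leibnizM i m hm, T.leibnizM i m hm, T.act_addl, T.act_mul, zsmul_act]
    module
  simp only [Submodule.mem_comap, LinearMap.sub_apply, LinearMap.comp_apply, LinearMap.flip_apply,
    actHom_apply, dHom_apply, expand]
  exact zsmul_mem (sub_mem (act_mem_filtration_of_mem_grM hi hm _)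
    (act_mem_filtration (act_mem_filtration_of_mem_grM hi hm _) b)) _

theorem IsGradedMap.map_mem_filtration {S : DGMod k A} {r : ℤ} {f : S.M → T.M}
    (hf : IsGradedMap S T r f) {x : S.M} (hx : x ∈ S.filtration c) :
    f x ∈ T.filtration (c + r) := by
  suffices S.filtration c ≤ (T.filtration (c + r)).comap hf.toLinearMap from this hx
  refine filtration_le fun i hi m hm a => ?_
  have := act_mem_filtration_of_mem_grM (c := c + r) (by omega) (hf.map_mem hm) a
  rwa [← hf.map_act] at this

theorem filtration_le_iSup_grM : T.filtration c ≤ ⨆ i, T.grM i := by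
  refine filtration_le fun i _ m hm a => ?_
  suffices ⨆ j, A.gr j ≤ (⨆ i, T.grM i).comap (T.actHom m) from
    this ((Decomposition.isInternal A.gr).submodule_iSup_eq_top ▸ Submodule.mem_top)
  exact iSup_le fun j a ha => Submodule.mem_iSup_of_mem (i + j) (T.act_gr i j m hm a ha)

theorem gradedEnd_eq_bot {r : ℤ} (hc : T.filtration c = ⊤) (hr : T.filtration (c + r) = ⊥) :
    T.gradedEnd r = ⊥ := by
  refine (AddSubgroup.eq_bot_iff_forall _).2 fun f hf => LinearMap.ext fun x => ?_
  have := hf.map_mem_filtration (hc ▸ Submodule.mem_top : x ∈ T.filtration c)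
  rwa [hr, Submodule.mem_bot] at this

theorem isHomotopyIdempotent (hT : ⨆ i, T.grM i = ⊤) {e : T.M → T.M} (he : IsHom T T e)
    {h : T.M → T.M} (hh : IsGradedMap T T (-1) h)
    (hidem : ∀ m, e (e m) - e m = T.dM (h m) + h (T.dM m)) :
    IdempotentLifting.IsHomotopyIdempotent T.gradedEnd T.dHom he.isGradedMap.toLinearMap
      hh.toLinearMap where
  commutator_mem := commutator_dHom_mem_gradedEnd hT
  sq_eq_zero := T.dHom_mul_dHom
  comm := LinearMap.ext fun m => (he.2.2.2.2 m).symm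
  mem_zero := he.isGradedMap
  homotopy_mem := hh
  homotopy := LinearMap.ext fun m => (hidem m).symm

end Filtration

section Restrict

/-- The dg submodule of `T` with underlying module `S`. -/
def restrict (T : DGMod k A) (S : Submodule k T.M) (act_mem : ∀ x ∈ S, ∀ a, T.act x a ∈ S)
    (d_mem : ∀ x ∈ S, T.dM x ∈ S) : DGMod k A where
  M := S
  grM i := (T.grM i).comap S.subtype
  act x a := ⟨T.act x a, act_mem x x.2 a⟩
  act_addl x y a := Subtype.ext (T.act_addl x y a)
  act_addr x a b := Subtype.ext (T.act_addr x a b)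
  act_smul c x a := Subtype.ext (T.act_smul c x a)
  act_smul' c x a := Subtype.ext (T.act_smul' c x a)
  act_one x := Subtype.ext (T.act_one x)
  act_mul x a b := Subtype.ext (T.act_mul x a b)
  act_gr i j x hx a ha := T.act_gr i j x hx a ha
  dM x := ⟨T.dM x, d_mem x x.2⟩
  dM_add x y := Subtype.ext (T.dM_add x y)
  dM_smul c x := Subtype.ext (T.dM_smul c x)
  dM_sq x := Subtype.ext (T.dM_sq x)
  dM_gr i x hx := T.dM_gr i x hx
  leibnizM i x hx a := Subtype.ext (T.leibnizM i x hx a)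

/-- The underlying module of `T.truncation c`. -/
def truncationSubmodule (T : DGMod k A) (c : ℤ) : Submodule k T.M :=
  T.filtration c ⊓ (T.filtration c).comap T.dHom

theorem mem_truncationSubmodule {T : DGMod k A} {c : ℤ} {x : T.M} :
    x ∈ T.truncationSubmodule c ↔ x ∈ T.filtration c ∧ T.dM x ∈ T.filtration c :=
  Iff.rfl

/-- The largest dg submodule of `T` contained in `T.filtration c`. -/
def truncation (T : DGMod k A) (c : ℤ) : DGMod k A :=
  T.restrict (T.truncationSubmodule c)
    (fun x hx a => ⟨act_mem_filtration hx.1 a, by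
      simpa using add_mem (dM_act_sub_mem_filtration hx.1 a) (act_mem_filtration hx.2 a)⟩)
    (fun x hx => mem_truncationSubmodule.2 ⟨hx.2, by simp [T.dM_sq]⟩)

end Restrict
/-- A presentation of the graded module underlying `T` as a summand of a product of shifts of `A`,
with generators of degrees `deg` of which only finitely many lie below any bound: `coord` embeds
`T` into the product and `lift` is a retraction. Condition `coord_lift_eq_zero` says that the matrix
of `coord ∘ lift` is block diagonal, so that for `A` in non-negative degrees it has entries in
`A⁰`; thus a cohesive module is a dg module with a finite frame. -/
structure Frame (T : DGMod k A) (J : Type) (deg : J → ℤ) where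
  coord : T.M →ₗ[k] (J → A.A)
  lift : (J → A.A) →ₗ[k] T.M
  coord_act : ∀ m a j, coord (T.act m a) j = coord m j * a
  coord_mem : ∀ {g m}, m ∈ T.grM g → ∀ j, coord m j ∈ A.gr (g - deg j)
  lift_act : ∀ v a, lift (fun j => v j * a) = T.act (lift v) a
  lift_mem : ∀ {g v}, (∀ j, v j ∈ A.gr (g - deg j)) → lift v ∈ T.grM g
  lift_coord : ∀ m, lift (coord m) = m
  coord_lift_eq_zero : ∀ {v j}, (∀ i, deg i = deg j → v i = 0) → coord (lift v) j = 0
  finite_deg_le : ∀ c, {j | deg j ≤ c}.Finite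

namespace Frame

variable {T : DGMod k A} {J : Type} {deg : J → ℤ}

/-- The same frame indexed by an equivalent type. -/
def reindex (F : Frame T J deg) {I : Type} (φ : I ≃ J) : Frame T I (deg ∘ φ) where
  coord := LinearMap.funLeft k A.A φ ∘ₗ F.coord
  lift := F.lift ∘ₗ LinearMap.funLeft k A.A φ.symm
  coord_act m a j := F.coord_act m a (φ j)
  coord_mem hm j := F.coord_mem hm (φ j)
  lift_act v a := F.lift_act (v ∘ φ.symm) a
  lift_mem hv := F.lift_mem fun j => by simpa using hv (φ.symm j)
  lift_coord m := by
    have : F.coord m ∘ φ ∘ φ.symm = F.coord m := by simp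
    exact (congrArg F.lift this).trans (F.lift_coord m)
  coord_lift_eq_zero {v j} hv := F.coord_lift_eq_zero fun i hi => hv (φ.symm i) (by simpa using hi)
  finite_deg_le c := Set.Finite.preimage (f := φ) φ.injective.injOn (F.finite_deg_le c)

section Generators

variable [DecidableEq J] (F : Frame T J deg)

/-- The generator of `T` with index `j`. -/
def gen (j : J) : T.M := F.lift (Pi.single j 1)

theorem gen_mem (j : J) : F.gen j ∈ T.grM (deg j) := F.lift_mem fun i => by
  rcases eq_or_ne i j with rfl | h
  · simpa using SetLike.GradedOne.one_mem (A := A.gr)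
  · simp [h]

theorem lift_eq_sum {v : J → A.A} {s : Finset J} (hv : ∀ j ∉ s, v j = 0) :
    F.lift v = ∑ j ∈ s, T.act (F.gen j) (v j) := by
  have expand : v = ∑ j ∈ s, fun i => (Pi.single j 1 : J → A.A) i * v j := by
    ext i
    simpa [Pi.single_apply, Finset.sum_apply] using hv i
  calc F.lift v = ∑ j ∈ s, F.lift fun i => (Pi.single j 1 : J → A.A) i * v j := by
        rw [← map_sum, ← expand]
    _ = ∑ j ∈ s, T.act (F.gen j) (v j) := Finset.sum_congr rfl fun j _ => F.lift_act _ _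

end Generators

theorem isCohesive_of_fin {n : ℕ} {deg : Fin n → ℤ} (F : Frame T (Fin n) deg) : IsCohesive T := by
  have coord_lift (v : Fin n → A.A) (i : Fin n) :
      F.coord (F.lift v) i = ∑ l, F.coord (F.gen l) i * v l := by
    rw [F.lift_eq_sum (s := Finset.univ) (by simp), map_sum, Finset.sum_apply]
    exact Finset.sum_congr rfl fun l _ => F.coord_act _ _ _
  have off_diagonal (i j : Fin n) (hij : deg i ≠ deg j) : F.coord (F.gen j) i = 0 :=
    F.coord_lift_eq_zero fun l hl => Pi.single_eq_of_ne (by rintro rfl; exact hij hl.symm) _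
  refine ⟨n, deg, fun i j => F.coord (F.gen j) i, F.coord, F.lift, fun i j => ?_, off_diagonal,
    fun i j => ?_, by simp, fun m a i => F.coord_act m a i, fun g m => F.coord_mem, map_add _,
    F.lift_act, fun g v => F.lift_mem, F.lift_coord, coord_lift⟩
  · by_cases hij : deg i = deg j
    · simpa [hij] using F.coord_mem (F.gen_mem j) i
    · simp [off_diagonal i j hij]
  · rw [← coord_lift, F.lift_coord]

theorem isCohesive [Finite J] (F : Frame T J deg) : IsCohesive T := by
  obtain ⟨n, ⟨φ⟩⟩ := Finite.exists_equiv_fin J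
  exact (F.reindex φ.symm).isCohesive_of_fin

end Frame

theorem IsCohesive.exists_frame {T : DGMod k A} (hT : IsCohesive T) :
    ∃ (n : ℕ) (deg : Fin n → ℤ), Nonempty (Frame T (Fin n) deg) := by
  obtain ⟨n, deg, e, p, ι, -, he, -, p_add, p_act, p_mem, ι_add, ι_act, ι_mem, ι_p, p_ι⟩ := hT
  refine ⟨n, deg, ⟨{
    coord := { toFun := p, map_add' := fun m m' => funext (p_add m m'), map_smul' := fun c m => ?_ }
    lift := { toFun := ι, map_add' := ι_add, map_smul' := fun c v => ?_ }
    coord_act := p_act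
    coord_mem := fun {g m} hm => p_mem g m hm
    lift_act := ι_act
    lift_mem := fun {g v} hv => ι_mem g v hv
    lift_coord := ι_p
    coord_lift_eq_zero := fun {v j} hv => ?_
    finite_deg_le := fun c => Set.toFinite _ }⟩⟩
  · ext i
    simp [smul_eq_act, p_act]
  · rw [RingHom.id_apply, smul_eq_act, ← ι_act]
    congr 1
    ext i
    simp
  · refine (p_ι v j).trans (Finset.sum_eq_zero fun l _ => ?_)
    by_cases h : deg l = deg j
    · rw [hv l h, mul_zero]
    · rw [he j l (Ne.symm h), zero_mul]

namespace Frame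

variable {T : DGMod k A} {J : Type} {deg : J → ℤ} (F : Frame T J deg)

theorem mem_filtration_of_coord_eq_zero {c : ℤ} {x : T.M} (hx : ∀ j, c < deg j → F.coord x j = 0) :
    x ∈ T.filtration c := by
  classical
  rw [← F.lift_coord x, F.lift_eq_sum (s := (F.finite_deg_le c).toFinset) (by simpa using hx)]
  exact sum_mem fun j hj => act_mem_filtration_of_mem_grM (by simpa using hj) (F.gen_mem j) _

theorem coord_eq_zero_of_mem_filtration (hA : ∀ i : ℤ, i < 0 → A.gr i = ⊥) {c : ℤ} {x : T.M}
    (hx : x ∈ T.filtration c) {j : J} (hj : c < deg j) : F.coord x j = 0 := by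
  suffices T.filtration c ≤ LinearMap.ker (LinearMap.proj j ∘ₗ F.coord) from this hx
  refine filtration_le fun i hi m hm a => ?_
  have : F.coord m j = 0 := by
    simpa [hA (i - deg j) (by omega)] using F.coord_mem hm j
  simp [F.coord_act, this]

include F in
theorem filtration_eq_top {c : ℤ} (hc : ∀ j, deg j ≤ c) : T.filtration c = ⊤ :=
  Submodule.eq_top_iff'.2 fun _ =>
    F.mem_filtration_of_coord_eq_zero fun j hj => absurd hj (hc j).not_gt

include F in
theorem filtration_eq_bot (hA : ∀ i : ℤ, i < 0 → A.gr i = ⊥) {c : ℤ} (hc : ∀ j, c < deg j) :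
    T.filtration c = ⊥ := by
  refine (Submodule.eq_bot_iff _).2 fun x hx => ?_
  rw [← F.lift_coord x, ← map_zero F.lift]
  exact congrArg F.lift (funext fun j => F.coord_eq_zero_of_mem_filtration hA hx (hc j))

section DegreeProj

/-- The projection of `T` onto the part generated in degree `c`. -/
def degreeProj (c : ℤ) : Module.End k T.M :=
  F.lift ∘ₗ LinearMap.pi (fun j => if deg j = c then LinearMap.proj j else 0) ∘ₗ F.coord

theorem degreeProj_apply (c : ℤ) (x : T.M) :
    F.degreeProj c x = F.lift fun j => if deg j = c then F.coord x j else 0 := by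
  simp only [degreeProj, LinearMap.comp_apply]
  congr 1
  ext j
  simp only [LinearMap.pi_apply]
  split_ifs <;> rfl

theorem degreeProj_mem_gradedEnd (c : ℤ) : F.degreeProj c ∈ T.gradedEnd 0 := by
  refine ⟨map_add _, map_smul _, fun m a => ?_, fun i m hm => ?_⟩
  · simp only [degreeProj_apply, F.coord_act, ← F.lift_act, ite_mul, zero_mul]
  · rw [degreeProj_apply, add_zero]
    refine F.lift_mem fun j => ?_
    split_ifs
    exacts [F.coord_mem hm j, zero_mem _]

theorem coord_degreeProj_eq_zero {c : ℤ} {j : J} (hj : deg j ≠ c) (x : T.M) :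
    F.coord (F.degreeProj c x) j = 0 := by
  rw [degreeProj_apply]
  exact F.coord_lift_eq_zero fun i hi => if_neg (hi ▸ hj)

variable (hA : ∀ i : ℤ, i < 0 → A.gr i = ⊥) {c : ℤ} {x : T.M}
include hA

theorem degreeProj_eq_zero {c' : ℤ} (hx : x ∈ T.filtration c') (hc : c' < c) :
    F.degreeProj c x = 0 := by
  rw [degreeProj_apply, ← map_zero F.lift]
  congr 1
  ext j
  rw [Pi.zero_apply, ite_eq_right_iff]
  exact fun hj => F.coord_eq_zero_of_mem_filtration hA hx (hj ▸ hc)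

theorem sub_degreeProj_mem_filtration (hx : x ∈ T.filtration c) :
    x - F.degreeProj c x ∈ T.filtration (c - 1) := by
  refine F.mem_filtration_of_coord_eq_zero fun j hj => ?_
  rw [degreeProj_apply]
  nth_rw 1 [← F.lift_coord x]
  rw [← map_sub]
  refine F.coord_lift_eq_zero fun i hi => ?_
  rcases eq_or_ne (deg i) c with h | h
  · simp [h]
  · simp [h, F.coord_eq_zero_of_mem_filtration hA hx (show c < deg i by omega)]

end DegreeProj
end Frame
namespace Frame

variable {T : DGMod k A}

section TruncationRetraction

variable {J : Type} {deg : J → ℤ} (F : Frame T J deg) (c : ℤ) (s : Module.End k T.M)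

/-- For `s` contracting `T` modulo `T.filtration (c - 1)`, this is a retraction of `T.filtration c`
onto `T.truncation c`: an element of `T.filtration c` belongs to the truncation when the degree `c`
part of its differential is compensated, which the last term achieves. -/
def truncationRetraction : Module.End k T.M :=
  1 - F.degreeProj c - F.degreeProj c * T.dHom * s

theorem truncationRetraction_apply (x : T.M) : F.truncationRetraction c s x
    = x - F.degreeProj c x - F.degreeProj c (T.dM (s x)) :=
  rfl

variable {c s} (hs : s ∈ T.gradedEnd (-1)) {x : T.M}
include hs

theorem dM_homotopy_mem_filtration (hx : x ∈ T.filtration c) : T.dM (s x) ∈ T.filtration c := by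
  simpa using dM_mem_filtration (hs.map_mem_filtration hx)

theorem truncationRetraction_mem_grM {g : ℤ} (hx : x ∈ T.grM g) :
    F.truncationRetraction c s x ∈ T.grM g := by
  have hθ {y : T.M} (hy : y ∈ T.grM g) : F.degreeProj c y ∈ T.grM g := by
    simpa using (F.degreeProj_mem_gradedEnd c).map_mem hy
  have hds : T.dM (s x) ∈ T.grM g := by simpa using T.dM_gr _ _ (hs.map_mem hx)
  exact sub_mem (sub_mem hx (hθ hx)) (hθ hds)

variable (hA : ∀ i : ℤ, i < 0 → A.gr i = ⊥)
include hA

theorem truncationRetraction_mem (hx : x ∈ T.filtration c) :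
    F.truncationRetraction c s x ∈ T.truncationSubmodule c := by
  have hle : T.filtration (c - 1) ≤ T.filtration c := filtration_mono (by omega)
  have hds := dM_homotopy_mem_filtration hs hx
  have hθx := F.sub_degreeProj_mem_filtration hA hx
  have hθds := F.sub_degreeProj_mem_filtration hA hds
  have d_mem {y : T.M} (hy : y ∈ T.filtration (c - 1)) : T.dM y ∈ T.filtration c := by
    simpa using dM_mem_filtration hy
  refine mem_truncationSubmodule.2 ⟨?_, ?_⟩
  · have : F.degreeProj c (T.dM (s x)) ∈ T.filtration c := by
      simpa using (F.degreeProj_mem_gradedEnd c).map_mem_filtration hds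
    exact sub_mem (hle hθx) this
  · have expand : T.dHom (F.truncationRetraction c s x) = T.dHom (x - F.degreeProj c x)
        + T.dHom (T.dM (s x) - F.degreeProj c (T.dM (s x))) := by
      have : T.dHom (T.dM (s x)) = 0 := T.dM_sq (s x)
      rw [truncationRetraction_apply, map_sub T.dHom (T.dM (s x)), this]
      simp only [map_sub]
      abel
    rw [← dHom_apply, expand]
    exact add_mem (d_mem hθx) (d_mem hθds)

theorem truncationRetraction_act (hx : x ∈ T.filtration c) (a : A.A) :
    F.truncationRetraction c s (T.act x a) = T.act (F.truncationRetraction c s x) a := by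
  have hsx : s x ∈ T.filtration (c - 1) := hs.map_mem_filtration hx
  have hd : F.degreeProj c (T.dM (T.act (s x) a)) = T.act (F.degreeProj c (T.dM (s x))) a := by
    have := F.degreeProj_eq_zero hA (dM_act_sub_mem_filtration hsx a) (sub_one_lt c)
    rwa [map_sub, (F.degreeProj_mem_gradedEnd c).map_act, sub_eq_zero] at this
  simp only [truncationRetraction_apply, hs.map_act, hd, (F.degreeProj_mem_gradedEnd c).map_act,
    sub_act]

theorem truncationRetraction_eq_self
    (hcontr : ∀ x, x + (T.dM (s x) + s (T.dM x)) ∈ T.filtration (c - 1))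
    (hx : x ∈ T.truncationSubmodule c) : F.truncationRetraction c s x = x := by
  have hcx := F.degreeProj_eq_zero hA (hcontr x) (sub_one_lt c)
  have hsd := F.degreeProj_eq_zero hA (hs.map_mem_filtration hx.2) (sub_one_lt c)
  rw [map_add, map_add, ← T.dHom_apply x, hsd, add_zero] at hcx
  rw [truncationRetraction_apply, sub_sub, hcx, sub_zero]

theorem coord_truncationRetraction_lift_eq_zero {v : J → A.A} (hv : ∀ j, c < deg j → v j = 0)
    {j : J} (hvj : ∀ i, deg i = deg j → v i = 0) :
    F.coord (F.truncationRetraction c s (F.lift v)) j = 0 := by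
  rcases eq_or_ne (deg j) c with rfl | hj
  · have hmem : F.lift v ∈ T.filtration (deg j - 1) := by
      refine F.mem_filtration_of_coord_eq_zero fun i hi => F.coord_lift_eq_zero fun l hl => ?_
      rcases eq_or_ne (deg l) (deg j) with h | h
      · exact hvj l h
      · exact hv l (by omega)
    rw [truncationRetraction_apply, F.degreeProj_eq_zero hA hmem (sub_one_lt _),
      F.degreeProj_eq_zero hA (dM_homotopy_mem_filtration hs hmem) (sub_one_lt _)]
    simp [F.coord_lift_eq_zero hvj]
  · simp [truncationRetraction_apply, F.coord_degreeProj_eq_zero hj, F.coord_lift_eq_zero hvj]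

end TruncationRetraction

section Truncation

variable {J : Type} {deg : J → ℤ} {c : ℤ}

/-- Extension by zero of coefficients for the generators of degree at most `c`. -/
noncomputable def extendByZero (A : DGA k) (deg : J → ℤ) (c : ℤ) :
    ({j // deg j ≤ c} → A.A) →ₗ[k] (J → A.A) :=
  (Function.ExtendByZero.linearMap A.A Subtype.val).restrictScalars k

theorem extendByZero_of_le (v : {j // deg j ≤ c} → A.A) {j : J} (hj : deg j ≤ c) :
    extendByZero A deg c v j = v ⟨j, hj⟩ :=
  Subtype.val_injective.extend_apply v 0 (⟨j, hj⟩ : {j // deg j ≤ c})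

theorem extendByZero_of_lt (v : {j // deg j ≤ c} → A.A) {j : J} (hj : c < deg j) :
    extendByZero A deg c v j = 0 :=
  Function.extend_apply' _ _ _ (by rintro ⟨⟨i, hi⟩, rfl⟩; exact hi.not_gt hj)

variable (F : Frame T J deg)

theorem lift_extendByZero_mem_filtration (v : {j // deg j ≤ c} → A.A) :
    F.lift (extendByZero A deg c v) ∈ T.filtration c :=
  F.mem_filtration_of_coord_eq_zero fun _ hj =>
    F.coord_lift_eq_zero fun _ hi => extendByZero_of_lt v (hi ▸ hj)

/-- The frame of `T.truncation c` given by the generators of degree at most `c`, moved into the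
truncation by `truncationRetraction`. -/
noncomputable def truncation (hA : ∀ i : ℤ, i < 0 → A.gr i = ⊥) {s : Module.End k T.M}
    (hs : s ∈ T.gradedEnd (-1))
    (hcontr : ∀ x, x + (T.dM (s x) + s (T.dM x)) ∈ T.filtration (c - 1)) :
    Frame (T.truncation c) {j // deg j ≤ c} (fun j => deg j) where
  coord := LinearMap.funLeft k A.A Subtype.val ∘ₗ F.coord ∘ₗ (T.truncationSubmodule c).subtype
  lift := (F.truncationRetraction c s ∘ₗ F.lift ∘ₗ extendByZero A deg c).codRestrict
    (T.truncationSubmodule c)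
    fun v => F.truncationRetraction_mem hs hA (F.lift_extendByZero_mem_filtration v)
  coord_act m a j := F.coord_act m.1 a j
  coord_mem hm j := F.coord_mem hm j
  lift_act v a := Subtype.ext <| by
    have extend_mul : extendByZero A deg c (fun j => v j * a)
        = fun j => extendByZero A deg c v j * a := by
      ext j
      rcases le_or_gt (deg j) c with hj | hj
      · simp [extendByZero_of_le _ hj]
      · simp [extendByZero_of_lt _ hj]
    calc F.truncationRetraction c s (F.lift (extendByZero A deg c fun j => v j * a))
        = F.truncationRetraction c s (T.act (F.lift (extendByZero A deg c v)) a) := by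
          rw [extend_mul, F.lift_act]
      _ = _ := F.truncationRetraction_act hs hA (F.lift_extendByZero_mem_filtration v) a
  lift_mem {g v} hv := F.truncationRetraction_mem_grM hs <| F.lift_mem fun j => by
    rcases le_or_gt (deg j) c with hj | hj
    · simpa [extendByZero_of_le _ hj] using hv ⟨j, hj⟩
    · simp [extendByZero_of_lt _ hj]
  lift_coord m := Subtype.ext <| by
    have extend_coord : extendByZero A deg c (fun j => F.coord m.1 j) = F.coord m.1 := by
      ext j
      rcases le_or_gt (deg j) c with hj | hj
      · exact extendByZero_of_le _ hj
      · rw [extendByZero_of_lt _ hj, F.coord_eq_zero_of_mem_filtration hA m.2.1 hj]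
    calc F.truncationRetraction c s (F.lift (extendByZero A deg c fun j => F.coord m.1 j))
        = F.truncationRetraction c s m.1 := by rw [extend_coord, F.lift_coord]
      _ = m.1 := F.truncationRetraction_eq_self hs hA hcontr m.2
  coord_lift_eq_zero {v j} hv := by
    refine F.coord_truncationRetraction_lift_eq_zero hs hA (fun i => extendByZero_of_lt v)
      fun i hi => ?_
    rw [extendByZero_of_le v (hi ▸ j.2)]
    exact hv ⟨i, hi ▸ j.2⟩ hi
  finite_deg_le b := Set.Finite.preimage (f := Subtype.val) Subtype.val_injective.injOn
    (F.finite_deg_le b)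

end Truncation

theorem isCohesive_truncation (hA : ∀ i : ℤ, i < 0 → A.gr i = ⊥) {J : Type} {deg : J → ℤ}
    (F : Frame T J deg) {c : ℤ} {s : Module.End k T.M} (hs : s ∈ T.gradedEnd (-1))
    (hcontr : ∀ x, x + (T.dM (s x) + s (T.dM x)) ∈ T.filtration (c - 1)) :
    IsCohesive (T.truncation c) :=
  have : Finite {j // deg j ≤ c} := F.finite_deg_le c
  (F.truncation hA hs hcontr).isCohesive

theorem exists_isCohesive_of_homotopic (hA : ∀ i : ℤ, i < 0 → A.gr i = ⊥) {M : DGMod k A}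
    {b : ℤ} (hb : M.filtration b = ⊤) {J : Type} {deg : J → ℤ} (F : Frame T J deg) {i : M.M → T.M}
    {q : T.M → M.M} (hi : IsHom M T i) (hq : IsHom T M q)
    (hiq : Homotopic T T (fun x => i (q x)) (fun x => x)) :
    ∃ N : DGMod k A, IsCohesive N ∧ ∃ (i' : M.M → N.M) (q' : N.M → M.M), IsHom M N i' ∧
      IsHom N M q' ∧ Homotopic N N (fun x => i' (q' x)) (fun x => x) ∧
      ∀ m, q' (i' m) = q (i m) := by
  obtain ⟨s, hs, hs_eq⟩ := hiq
  have hmono : T.filtration b ≤ T.filtration (b + 1) := filtration_mono (by omega)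
  have i_mem (m : M.M) : i m ∈ T.filtration b := by
    simpa using hi.isGradedMap.map_mem_filtration (hb ▸ Submodule.mem_top : m ∈ M.filtration b)
  have i_mem' (m : M.M) : i m ∈ T.truncationSubmodule (b + 1) :=
    ⟨hmono (i_mem m), hmono (hi.2.2.2.2 m ▸ i_mem (M.dM m) : T.dM (i m) ∈ T.filtration b)⟩
  have s_mem {x : T.M} (hx : x ∈ T.truncationSubmodule (b + 1)) :
      s x ∈ T.truncationSubmodule (b + 1) :=
    ⟨hmono (by simpa using hs.map_mem_filtration hx.1),
      dM_homotopy_mem_filtration (s := hs.toLinearMap) hs hx.1⟩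
  refine ⟨T.truncation (b + 1), F.isCohesive_truncation hA (s := hs.toLinearMap) hs fun x => ?_,
    fun m => ⟨i m, i_mem' m⟩, fun x => q x.1, ?_, ?_, ⟨fun x => ⟨s x.1, s_mem x.2⟩, ?_, ?_⟩, ?_⟩
  · have : x + (T.dM (hs.toLinearMap x) + hs.toLinearMap (T.dM x)) = i (q x) :=
      (congrArg (x + ·) (hs_eq x).symm).trans (add_sub_cancel x (i (q x)))
    rw [this, add_sub_cancel_right]
    exact i_mem (q x)
  · exact ⟨fun m m' => Subtype.ext (hi.1 m m'), fun r m => Subtype.ext (hi.2.1 r m),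
      fun m a => Subtype.ext (hi.2.2.1 m a), hi.2.2.2.1, fun m => Subtype.ext (hi.2.2.2.2 m)⟩
  · exact ⟨fun x y => hq.1 x.1 y.1, fun r x => hq.2.1 r x.1, fun x a => hq.2.2.1 x.1 a,
      fun j x hx => hq.2.2.2.1 j x.1 hx, fun x => hq.2.2.2.2 x.1⟩
  · exact ⟨fun x y => Subtype.ext (hs.1 x.1 y.1), fun r x => Subtype.ext (hs.2.1 r x.1),
      fun x a => Subtype.ext (hs.2.2.1 x.1 a), fun j x hx => hs.2.2.2 j x.1 hx⟩
  · exact fun x => Subtype.ext (hs_eq x.1)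
  · exact fun m => rfl

end Frame
/-- A lift of a homotopy idempotent of `L` along the endomorphism `X` of degree `2`: `V` is a
perturbation of the differential whose curvature `V²` compensates the failure of `P` to be
idempotent. -/
structure CurvedIdempotent (L : DGMod k A) (X : Module.End k L.M) where
  V : Module.End k L.M
  P : Module.End k L.M
  X_mem : X ∈ L.gradedEnd 2
  V_sub_mem : V - L.dHom ∈ L.gradedEnd 1
  P_mem : P ∈ L.gradedEnd 0
  V_mul_V : V * V = X * (P * P - P)
  P_mul_V : P * V = V * P
  V_mul_X : V * X = X * V
  P_mul_X : P * X = X * P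

namespace CurvedIdempotent

variable {L : DGMod k A} {X : Module.End k L.M} (C : CurvedIdempotent L X)

theorem V_V (v : L.M) : C.V (C.V v) = X (C.P (C.P v)) - X (C.P v) := by
  simpa using LinearMap.congr_fun C.V_mul_V v

theorem P_V (v : L.M) : C.P (C.V v) = C.V (C.P v) := LinearMap.congr_fun C.P_mul_V v

theorem V_X (v : L.M) : C.V (X v) = X (C.V v) := LinearMap.congr_fun C.V_mul_X v

theorem P_X (v : L.M) : C.P (X v) = X (C.P v) := LinearMap.congr_fun C.P_mul_X v

theorem V_mem {i : ℤ} {v : L.M} (hv : v ∈ L.grM i) : C.V v ∈ L.grM (i + 1) := by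
  simpa using add_mem (C.V_sub_mem.map_mem hv) (L.dM_gr i v hv)

theorem V_act {i : ℤ} {v : L.M} (hv : v ∈ L.grM i) (a : A.A) :
    C.V (L.act v a) = L.act (C.V v) a + (((-1 : ℤˣ) ^ i : ℤˣ) : ℤ) • L.act v (A.d a) := by
  have := C.V_sub_mem.map_act v a
  simp only [LinearMap.sub_apply, dHom_apply, L.leibnizM i v hv, sub_act] at this
  linear_combination (norm := abel) this

/-- Two copies of `L`, the second shifted by one, with the matrix `[[V, XP], [1 - P, -V]]` as
differential. -/
def cone : DGMod k A where
  M := L.M × L.M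
  grM i := (L.grM i).prod (L.grM (i - 1))
  act x a := (L.act x.1 a, L.act x.2 a)
  act_addl x y a := Prod.ext (L.act_addl ..) (L.act_addl ..)
  act_addr x a b := Prod.ext (L.act_addr ..) (L.act_addr ..)
  act_smul c x a := Prod.ext (L.act_smul ..) (L.act_smul ..)
  act_smul' c x a := Prod.ext (L.act_smul' ..) (L.act_smul' ..)
  act_one x := Prod.ext (L.act_one _) (L.act_one _)
  act_mul x a b := Prod.ext (L.act_mul ..) (L.act_mul ..)
  act_gr i j x hx a ha := ⟨L.act_gr i j _ hx.1 a ha, by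
    simpa [add_sub_right_comm] using L.act_gr (i - 1) j _ hx.2 a ha⟩
  dM x := (C.V x.1 + X (C.P x.2), x.1 - C.P x.1 - C.V x.2)
  dM_add x y := by
    ext <;> simp only [Prod.fst_add, Prod.snd_add, map_add] <;> abel
  dM_smul c x := by
    ext <;> simp only [Prod.smul_fst, Prod.smul_snd, map_smul, smul_add, smul_sub]
  dM_sq x := by
    ext <;> simp only [map_add, map_sub, C.V_V, C.P_V, C.V_X, C.P_X, Prod.fst_zero, Prod.snd_zero]
      <;> abel
  dM_gr i x hx := by
    have hP {j : ℤ} {v : L.M} (hv : v ∈ L.grM j) : C.P v ∈ L.grM j := by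
      simpa using C.P_mem.map_mem hv
    have hXP : X (C.P x.2) ∈ L.grM (i + 1) := by
      convert C.X_mem.map_mem (hP hx.2) using 2
      ring
    have hV : C.V x.2 ∈ L.grM i := by simpa using C.V_mem hx.2
    refine ⟨add_mem (C.V_mem hx.1) hXP, ?_⟩
    rw [add_sub_cancel_right]
    exact sub_mem (sub_mem hx.1 (hP hx.1)) hV
  leibnizM i x hx a := by
    have sign : (((-1 : ℤˣ) ^ (i - 1) : ℤˣ) : ℤ) = -(((-1 : ℤˣ) ^ i : ℤˣ) : ℤ) := by
      simp [zpow_sub_one]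
    ext
    · simp only [C.V_act hx.1, C.P_mem.map_act, C.X_mem.map_act, L.act_addl, Prod.fst_add,
        Prod.smul_fst]
      abel
    · simp only [C.V_act hx.2, C.P_mem.map_act, sub_act, sign, Prod.snd_add, Prod.smul_snd]
      module

end CurvedIdempotent

/-- The frame of the cone consisting of two copies of a frame of `L`, the second shifted by one. -/
def Frame.cone {L : DGMod k A} {J : Type} {deg : J → ℤ} (F : Frame L J deg)
    {X : Module.End k L.M} (C : CurvedIdempotent L X) :
    Frame C.cone (J ⊕ J) (Sum.elim deg fun j => deg j + 1) where
  coord :=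
    (LinearEquiv.sumArrowLequivProdArrow J J k A.A).symm.toLinearMap ∘ₗ F.coord.prodMap F.coord
  lift := F.lift.prodMap F.lift ∘ₗ (LinearEquiv.sumArrowLequivProdArrow J J k A.A).toLinearMap
  coord_act m a := Sum.rec (F.coord_act m.1 a) (F.coord_act m.2 a)
  coord_mem {g m} hm := Sum.rec (F.coord_mem hm.1) fun j => by
    change F.coord m.2 j ∈ A.gr (g - (deg j + 1))
    rw [sub_add_eq_sub_sub_swap]
    exact F.coord_mem hm.2 j
  lift_act v a := Prod.ext (F.lift_act (v ∘ Sum.inl) a) (F.lift_act (v ∘ Sum.inr) a)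
  lift_mem {g v} hv := ⟨F.lift_mem fun j => hv (Sum.inl j), F.lift_mem fun j => by
    rw [← sub_add_eq_sub_sub_swap]
    exact hv (Sum.inr j)⟩
  lift_coord m := Prod.ext (F.lift_coord m.1) (F.lift_coord m.2)
  coord_lift_eq_zero {v j} := by
    rcases j with j | j <;> intro hv
    · exact F.coord_lift_eq_zero fun i hi => hv (Sum.inl i) hi
    · exact F.coord_lift_eq_zero fun i hi => hv (Sum.inr i) (congrArg (· + 1) hi)
  finite_deg_le c := Set.finite_preimage_inl_and_inr.1 ⟨F.finite_deg_le c,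
    (F.finite_deg_le (c - 1)).subset fun j (hj : deg j + 1 ≤ c) => le_sub_iff_add_le.2 hj⟩

/-- The dg module of sequences in `M`, thought of as power series over `M` in a variable of
degree `2`. -/
def seq (M : DGMod k A) : DGMod k A where
  M := ℕ → M.M
  grM i := Submodule.pi Set.univ fun n => M.grM (i - 2 * n)
  act v a n := M.act (v n) a
  act_addl v w a := funext fun n => M.act_addl ..
  act_addr v a b := funext fun n => M.act_addr ..
  act_smul c v a := funext fun n => M.act_smul ..
  act_smul' c v a := funext fun n => M.act_smul' ..
  act_one v := funext fun n => M.act_one _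
  act_mul v a b := funext fun n => M.act_mul ..
  act_gr i j v hv a ha n hn := by
    simpa [add_sub_right_comm] using M.act_gr _ j _ (hv n hn) a ha
  dM v n := M.dM (v n)
  dM_add v w := funext fun n => M.dM_add ..
  dM_smul c v := funext fun n => M.dM_smul ..
  dM_sq v := funext fun n => M.dM_sq _
  dM_gr i v hv n hn := by
    simpa [add_sub_right_comm] using M.dM_gr _ _ (hv n hn)
  leibnizM i v hv a := funext fun n => by
    have sign : (-1 : ℤˣ) ^ (i - 2 * n) = (-1 : ℤˣ) ^ i := by
      simp [zpow_sub, zpow_mul]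
    simpa [sign] using M.leibnizM _ _ (hv n trivial) a

variable {M : DGMod k A}

theorem mem_grM_seq {i : ℤ} {v : M.seq.M} :
    v ∈ M.seq.grM i ↔ ∀ n : ℕ, v n ∈ M.grM (i - 2 * n) :=
  ⟨fun hv n => hv n trivial, fun hv n _ => hv n⟩

/-- The frame of the sequences in `M` formed by the multiples `Xⁿ m` of the generators `m`
of `M`. -/
def Frame.seq {J : Type} {deg : J → ℤ} (F : Frame M J deg) :
    Frame M.seq (ℕ × J) (fun x => deg x.2 + 2 * x.1) where
  coord := LinearMap.pi fun x =>
    (LinearMap.proj x.2 : (J → A.A) →ₗ[k] A.A) ∘ₗ F.coord ∘ₗ LinearMap.proj x.1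
  lift := LinearMap.pi fun n => F.lift ∘ₗ LinearMap.funLeft k A.A (Prod.mk n)
  coord_act v a x := F.coord_act (v x.1) a x.2
  coord_mem {g v} hv x := by
    change F.coord (v x.1) x.2 ∈ A.gr (g - (deg x.2 + 2 * x.1))
    rw [sub_add_eq_sub_sub_swap]
    exact F.coord_mem (hv x.1 trivial) x.2
  lift_act u a := funext fun n => F.lift_act (fun j => u (n, j)) a
  lift_mem {g u} hu n _ := F.lift_mem fun j => by
    rw [← sub_add_eq_sub_sub_swap]
    exact hu (n, j)
  lift_coord v := funext fun n => F.lift_coord (v n)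
  coord_lift_eq_zero {u x} hu := F.coord_lift_eq_zero fun j hj => hu (x.1, j) (by rw [hj])
  finite_deg_le c := by
    refine ((F.finite_deg_le c).biUnion fun j _ =>
      (Set.finite_Iic (c - deg j).toNat).image (·, j)).subset fun x hx => ?_
    have hx : deg x.2 + 2 * x.1 ≤ c := hx
    refine Set.mem_biUnion (show deg x.2 ≤ c by omega) ⟨x.1, ?_, rfl⟩
    exact Set.mem_Iic.2 (by omega)

section Shift

variable (M)

/-- Multiplication by the variable of degree `2`. -/
def shift : Module.End k M.seq.M where
  toFun v
    | 0 => 0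
    | n + 1 => v n
  map_add' v w := funext fun n => by
    cases n with
    | zero => exact (add_zero 0).symm
    | succ n => rfl
  map_smul' c v := funext fun n => by
    cases n with
    | zero => exact (smul_zero c).symm
    | succ n => rfl

/-- The left inverse of `shift` that drops the first term. -/
def unshift : Module.End k M.seq.M := LinearMap.funLeft k M.M Nat.succ

/-- The inclusion of `M` as the constant power series. -/
def const : M.M →ₗ[k] M.seq.M := LinearMap.single k (fun _ => M.M) 0

variable {M}

@[simp] theorem const_zero (m : M.M) : M.const m 0 = m := rfl

theorem unshift_shift (v : M.seq.M) : M.unshift (M.shift v) = v := rfl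

theorem shift_unshift (v : M.seq.M) : M.shift (M.unshift v) = v - M.const (v 0) := by
  refine funext fun n => ?_
  cases n with
  | zero => exact (sub_self (v 0)).symm
  | succ n => exact (sub_zero (v (n + 1))).symm

theorem shift_mem_gradedEnd : M.shift ∈ M.seq.gradedEnd 2 := by
  refine ⟨map_add _, map_smul _, fun v a => funext fun n => ?_, fun i v hv => ?_⟩
  · cases n with
    | zero => exact (M.zero_act a).symm
    | succ n => rfl
  · refine mem_grM_seq.2 fun n => ?_
    cases n with
    | zero => exact zero_mem _
    | succ n =>
      have hdeg : i + 2 - 2 * (n + 1 : ℕ) = i - 2 * n := by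
        push_cast
        ring
      exact hdeg ▸ mem_grM_seq.1 hv n

theorem unshift_mem_gradedEnd : M.unshift ∈ M.seq.gradedEnd (-2) := by
  refine ⟨map_add _, map_smul _, fun v a => rfl, fun i v hv => mem_grM_seq.2 fun n => ?_⟩
  have hdeg : i + -2 - 2 * n = i - 2 * (n + 1 : ℕ) := by
    push_cast
    ring
  exact hdeg ▸ mem_grM_seq.1 hv (n + 1)

theorem const_mem {i : ℤ} {m : M.M} (hm : m ∈ M.grM i) : M.const m ∈ M.seq.grM i := by
  refine mem_grM_seq.2 fun n => ?_
  cases n with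
  | zero => simpa using hm
  | succ n => exact zero_mem _

theorem const_act (m : M.M) (a : A.A) : M.const (M.act m a) = M.seq.act (M.const m) a := by
  refine funext fun n => ?_
  cases n with
  | zero => rfl
  | succ n => exact (M.zero_act a).symm

end Shift

section SeqEval

open Polynomial IdempotentLifting

variable (M) in
/-- The termwise action of the endomorphisms of `M` on sequences. -/
def mapSeq : Module.End k M.M →+* Module.End k M.seq.M where
  toFun f := f.compLeft ℕ
  map_one' := rfl
  map_mul' _ _ := rfl
  map_zero' := rfl
  map_add' _ _ := rfl

theorem mapSeq_apply (f : Module.End k M.M) (v : M.seq.M) (n : ℕ) : M.mapSeq f v n = f (v n) := rfl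

theorem mapSeq_mem_gradedEnd {r : ℤ} {f : Module.End k M.M} (hf : f ∈ M.gradedEnd r) :
    M.mapSeq f ∈ M.seq.gradedEnd r :=
  ⟨map_add _, map_smul _, fun v a => funext fun n => hf.map_act (v n) a, fun i v hv =>
    mem_grM_seq.2 fun n => by
      simpa [add_sub_right_comm, mapSeq_apply] using hf.map_mem (mem_grM_seq.1 hv n)⟩

theorem commute_mapSeq_shift (f : Module.End k M.M) : Commute (M.mapSeq f) M.shift :=
  LinearMap.ext fun v => funext fun n => by
    cases n with
    | zero => exact map_zero f
    | succ n => rfl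

variable (M) in
/-- The action of polynomials with coefficients in the endomorphisms of `M` on power series
over `M`. -/
noncomputable def seqEval : (Module.End k M.M)[X] →+* Module.End k M.seq.M :=
  eval₂RingHom' M.mapSeq M.shift commute_mapSeq_shift

theorem seqEval_C (f : Module.End k M.M) : M.seqEval (C f) = M.mapSeq f := eval₂_C _ _

theorem seqEval_X : M.seqEval X = M.shift := eval₂_X _ _

theorem seqEval_apply_zero (S : (Module.End k M.M)[X]) (v : M.seq.M) :
    M.seqEval S v 0 = S.coeff 0 (v 0) := by
  conv_lhs => rw [← X_mul_divX_add S, map_add, map_mul, seqEval_C, seqEval_X]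
  exact zero_add _

theorem seqEval_mem_gradedEnd {r : ℤ} {S : (Module.End k M.M)[X]}
    (hS : S ∈ polyDegree M.gradedEnd r) : M.seqEval S ∈ M.seq.gradedEnd r := by
  change eval₂ M.mapSeq M.shift S ∈ _
  rw [eval₂_eq_sum_range]
  refine sum_mem fun n _ => mul_mem_of_add_eq ?_ (mapSeq_mem_gradedEnd (hS n))
    (SetLike.pow_mem_graded n shift_mem_gradedEnd)
  rw [nsmul_eq_mul]
  ring

/-- The curved idempotent on the power series over `M` obtained from a solution of the lifting
equations over the polynomials. -/
noncomputable def curvedIdempotentOfIsDeformation {p : Module.End k M.M}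
    {V P : (Module.End k M.M)[X]} (hVP : IsDeformation M.gradedEnd M.dHom p V P)
    (hV : V * V = X * (P * P - P)) (hPV : P * V = V * P) : CurvedIdempotent M.seq M.shift where
  V := M.seqEval V
  P := M.seqEval P
  X_mem := shift_mem_gradedEnd
  V_sub_mem := by
    have : M.seqEval (V - C M.dHom) = M.seqEval V - M.seq.dHom := by
      rw [map_sub, seqEval_C]
      rfl
    exact this ▸ seqEval_mem_gradedEnd hVP.sub_mem_one
  P_mem := seqEval_mem_gradedEnd hVP.mem_zero
  V_mul_V := by rw [← map_mul, hV, map_mul, seqEval_X, map_sub, map_mul]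
  P_mul_V := by rw [← map_mul, hPV, map_mul]
  V_mul_X := by rw [← seqEval_X, ← map_mul, ← X_mul, map_mul]
  P_mul_X := by rw [← seqEval_X, ← map_mul, ← X_mul, map_mul]

theorem exists_curvedIdempotent {b c : ℤ} (hb : M.filtration b = ⊤)
    (hc : ∀ i < c, M.filtration i = ⊥) {e : M.M → M.M} (he : IsHom M M e)
    (hidem : Homotopic M M (fun m => e (e m)) e) :
    ∃ C : CurvedIdempotent M.seq M.shift, ∀ v, C.V v 0 = M.dM (v 0) ∧ C.P v 0 = e (v 0) := by
  obtain ⟨h, hh, hidem⟩ := hidem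
  have hM : ⨆ i, M.grM i = ⊤ := top_le_iff.1 (hb ▸ filtration_le_iSup_grM)
  obtain ⟨V, P, hVP, hV, hPV⟩ := IsDeformation.exists_of_bounded
    (isHomotopyIdempotent hM he hh hidem) (c := c - b)
    fun r hr => gradedEnd_eq_bot hb (hc (b + r) (by omega))
  refine ⟨curvedIdempotentOfIsDeformation hVP hV hPV, fun v => ⟨?_, ?_⟩⟩
  · exact (seqEval_apply_zero V v).trans (by rw [hVP.coeff_zero_left, dHom_apply])
  · exact (seqEval_apply_zero P v).trans (by rw [hVP.coeff_zero_right]; rfl)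

end SeqEval

theorem unshift_dHom_const (m : M.M) : M.unshift (M.seq.dHom (M.const m)) = 0 :=
  funext fun _ => M.dHom.map_zero

namespace CurvedIdempotent

variable (C : CurvedIdempotent M.seq M.shift)

/-- The inclusion of `M` into the cone, through which the homotopy idempotent factors. -/
def coneInclusion : M.M →ₗ[k] C.cone.M :=
  (C.P ∘ₗ M.const).prod (-(M.unshift ∘ₗ C.V ∘ₗ M.const))

/-- The projection of the cone onto `M` given by the constant term of the first component. -/
def coneProjection : C.cone.M →ₗ[k] M.M :=
  (LinearMap.proj 0 : (ℕ → M.M) →ₗ[k] M.M) ∘ₗ LinearMap.fst k M.seq.M M.seq.M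

/-- A homotopy from the identity of the cone to `coneInclusion ∘ coneProjection`. -/
def coneHomotopy : Module.End k C.cone.M :=
  (-LinearMap.snd k M.seq.M M.seq.M).prod (-(M.unshift ∘ₗ LinearMap.fst k M.seq.M M.seq.M))

theorem coneInclusion_apply (m : M.M) :
    C.coneInclusion m = (C.P (M.const m), -M.unshift (C.V (M.const m))) :=
  rfl

theorem dM_cone (x : C.cone.M) :
    C.cone.dM x = (C.V x.1 + M.shift (C.P x.2), x.1 - C.P x.1 - C.V x.2) :=
  rfl

theorem isGradedMap_coneHomotopy : IsGradedMap C.cone C.cone (-1) C.coneHomotopy := by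
  refine ⟨map_add _, map_smul _, fun x a => ?_, fun i x hx => ⟨neg_mem hx.2, neg_mem ?_⟩⟩
  · exact Prod.ext (M.seq.neg_act _ _).symm (M.seq.neg_act _ _).symm
  · have := unshift_mem_gradedEnd.map_mem hx.1
    rwa [show i + -2 = i + -1 - 1 by ring] at this

theorem unshift_V_const (m : M.M) :
    M.unshift (C.V (M.const m)) = M.unshift ((C.V - M.seq.dHom) (M.const m)) := by
  rw [LinearMap.sub_apply, map_sub, unshift_dHom_const, sub_zero]

theorem homotopic_coneInclusion_coneProjection :
    Homotopic C.cone C.cone (fun x => C.coneInclusion (C.coneProjection x)) (fun x => x) := by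
  refine ⟨C.coneHomotopy, C.isGradedMap_coneHomotopy, fun x => ?_⟩
  have hx : M.shift (M.unshift x.1) = x.1 - M.const (x.1 0) := shift_unshift x.1
  refine Prod.ext ?_ ?_
  · change C.P (M.const (x.1 0)) - x.1
      = C.V (-x.2) + M.shift (C.P (-M.unshift x.1)) + -(x.1 - C.P x.1 - C.V x.2)
    simp only [map_neg, ← C.P_X, hx, map_sub]
    abel
  · change -M.unshift (C.V (M.const (x.1 0))) - x.2
      = -x.2 - C.P (-x.2) - C.V (-M.unshift x.1) + -M.unshift (C.V x.1 + M.shift (C.P x.2))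
    have hconst : M.const (x.1 0) = x.1 - M.shift (M.unshift x.1) := by rw [hx, sub_sub_cancel]
    simp only [hconst, map_neg, map_sub, map_add, C.V_X, unshift_shift]
    abel

variable (hV : ∀ v, C.V v 0 = M.dM (v 0))
include hV

theorem isHom_coneProjection : IsHom C.cone M C.coneProjection := by
  refine ⟨map_add _, map_smul _, fun x a => rfl, fun i x hx => ?_, fun x => ?_⟩
  · have := mem_grM_seq.1 hx.1 0
    rwa [Nat.cast_zero, mul_zero, sub_zero] at this
  · exact (congrArg (· + 0) (hV x.1)).trans (add_zero _)

theorem shift_unshift_V_const (m : M.M) :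
    M.shift (M.unshift (C.V (M.const m))) = C.V (M.const m) - M.const (M.dM m) := by
  rw [shift_unshift, hV, const_zero]

theorem coneInclusion_dM (m : M.M) : C.coneInclusion (M.dM m) = C.cone.dM (C.coneInclusion m) := by
  rw [dM_cone, coneInclusion_apply, coneInclusion_apply]
  refine Prod.ext ?_ ?_
  · simp only [map_neg, ← C.P_X, C.shift_unshift_V_const hV, map_sub, C.P_V]
    abel
  · have key : M.shift (C.P (M.const m) - C.P (C.P (M.const m))
        + C.V (M.unshift (C.V (M.const m)))) = - C.V (M.const (M.dM m)) := by
      rw [map_add, map_sub, ← C.V_X, C.shift_unshift_V_const hV, map_sub, C.V_V]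
      abel
    have := congrArg M.unshift key
    rw [unshift_shift, map_neg] at this
    simpa using this.symm

theorem isHom_coneInclusion : IsHom M C.cone C.coneInclusion := by
  refine ⟨map_add _, map_smul _, fun m a => ?_, fun i m hm => ⟨?_, neg_mem ?_⟩,
    C.coneInclusion_dM hV⟩
  · rw [coneInclusion_apply, coneInclusion_apply, unshift_V_const, unshift_V_const,
      const_act, C.P_mem.map_act, C.V_sub_mem.map_act, unshift_mem_gradedEnd.map_act]
    exact Prod.ext rfl (M.seq.neg_act _ _).symm
  · exact add_zero i ▸ C.P_mem.map_mem (const_mem hm)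
  · have := unshift_mem_gradedEnd.map_mem (C.V_sub_mem.map_mem (const_mem hm))
    rwa [← unshift_V_const, show i + 1 + -2 = i - 1 by ring] at this

end CurvedIdempotent
end DGMod

theorem idempotents_split_in_homotopy_category_of_cohesive_modules_general
    {k : Type} [CommRing k] (A : DGA k)
    (hnneg : ∀ i : ℤ, i < 0 → A.gr i = ⊥)
    (M : DGMod k A) (hM : DGMod.IsCohesive M)
    (e : M.M → M.M) (he : DGMod.IsHom M M e)
    (hidem : DGMod.Homotopic M M (fun m => e (e m)) e) :
    ∃ N : DGMod k A, DGMod.IsCohesive N ∧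
      ∃ (p : M.M → N.M) (j : N.M → M.M),
        DGMod.IsHom M N p ∧ DGMod.IsHom N M j ∧
        DGMod.Homotopic N N (fun x => p (j x)) (fun x => x) ∧
        DGMod.Homotopic M M (fun m => j (p m)) e := by
  obtain ⟨n, deg, ⟨F⟩⟩ := hM.exists_frame
  obtain ⟨b, hb⟩ := (Set.finite_range deg).bddAbove
  obtain ⟨c, hc⟩ := (Set.finite_range deg).bddBelow
  have filtration_top : M.filtration b = ⊤ := F.filtration_eq_top fun j => hb ⟨j, rfl⟩
  have filtration_bot (i : ℤ) (hi : i < c) : M.filtration i = ⊥ :=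
    F.filtration_eq_bot hnneg fun j => hi.trans_le (hc ⟨j, rfl⟩)
  obtain ⟨C, hC⟩ := DGMod.exists_curvedIdempotent filtration_top filtration_bot he hidem
  have hV (v) : C.V v 0 = M.dM (v 0) := (hC v).1
  obtain ⟨N, hN, p, j, hp, hj, hpj, hjp⟩ := (F.seq.cone C).exists_isCohesive_of_homotopic hnneg
    filtration_top (C.isHom_coneInclusion hV) (C.isHom_coneProjection hV)
    C.homotopic_coneInclusion_coneProjection
  have hjp' : (fun m => j (p m)) = e := funext fun m => (hjp m).trans (hC (M.const m)).2
  exact ⟨N, hN, p, j, hp, hj, hpj, hjp' ▸ DGMod.Homotopic.refl _⟩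

/-- **Theorem.** Let `A` be a dg algebra concentrated in non-negative degrees that is
flat as a module over its degree-zero part `A⁰`.  Then every idempotent morphism in the
homotopy category of cohesive `A`-modules splits. -/
theorem idempotents_split_in_homotopy_category_of_cohesive_modules
    {k : Type} [CommRing k] (A : DGA k)
    (hnneg : ∀ i : ℤ, i < 0 → A.gr i = ⊥)
    (hflat : RightFlatOverDegreeZero A)
    (M : DGMod k A) (hM : DGMod.IsCohesive M)
    (e : M.M → M.M) (he : DGMod.IsHom M M e)
    (hidem : DGMod.Homotopic M M (fun m => e (e m)) e) :
    ∃ N : DGMod k A, DGMod.IsCohesive N ∧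
      ∃ (p : M.M → N.M) (j : N.M → M.M),
        DGMod.IsHom M N p ∧ DGMod.IsHom N M j ∧
        DGMod.Homotopic N N (fun x => p (j x)) (fun x => x) ∧
        DGMod.Homotopic M M (fun m => j (p m)) e :=
  idempotents_split_in_homotopy_category_of_cohesive_modules_general A hnneg M hM e he hidem
end
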